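/- arXiv:0811.2821 — 6 statements merged into one kernel-verified Lean document; each statement's English description precedes it below -/
import Mathlib

section
/- Let f ∈ A₁(c). Then for every x ∈ (−1,c₂) with x ≠ c₁: ((c₄−c₃)/(c₂−c₁))·((1−c₂)/(1−x)) ≤ (f(x)−c₃)/(x−c₁) ≤ ((c₄−c₃)/(c₂−c₁))·((1+c₂)/(1+x)); and for every x ∈ (c₂,1): ((c₄−c₃)/(c₂−c₁))·((1+c₂)/(1+x)) ≤ (f(x)−c₃)/(x−c₁) ≤ ((c₄−c₃)/(c₂−c₁))·((1−c₂)/(1−x)). -/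
open Set Complex

noncomputable section

/-- The doubly-slit plane `ℂ(J)` for `J ⊆ ℝ`. -/
def CSlit (J : Set ℝ) : Set ℂ := {z : ℂ | z.im ≠ 0 ∨ z.re ∈ J}

/-- `ℂ₁ = ℂ((−1,1))`. -/
def C1 : Set ℂ := CSlit (Set.Ioo (-1 : ℝ) 1)

/-- The class `A₁(c)` of normalized Herglotz functions. -/
structure MemA1 (c₁ c₂ c₃ c₄ : ℝ) (f : ℂ → ℂ) : Prop where
  holo : DifferentiableOn ℂ f C1
  maps : Set.MapsTo f C1 C1
  symm : ∀ z ∈ C1, f (starRingEnd ℂ z) = starRingEnd ℂ (f z)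
  upper : ∀ z ∈ C1, 0 < z.im → 0 ≤ (f z).im
  lower : ∀ z ∈ C1, z.im < 0 → (f z).im ≤ 0
  val1 : f (c₁ : ℂ) = (c₃ : ℂ)
  val2 : f (c₂ : ℂ) = (c₄ : ℂ)


lemma harnack_aux (P : ℂ → ℂ) (hP : DifferentiableOn ℂ P (Metric.ball 0 1))
    (hre : ∀ w ∈ Metric.ball (0:ℂ) 1, 0 ≤ (P w).re) (b β x p : ℝ) (hb : |b| < 1) (hx : |x| < 1)
    (hβ : 0 < β) (hPb : P b = β) (hPx : P x = p) :
    |p - β| * (1 - b * x) ≤ |x - b| * (p + β) := by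
  have hb' := abs_lt.1 hb
  have hx' := abs_lt.1 hx
  have hbx : 0 < 1 - b * x := by nlinarith
  have hp : 0 ≤ p := by
    have := hre x (by simpa using hx)
    simpa [hPx] using this
  have hden : ∀ ζ ∈ Metric.ball (0:ℂ) 1, (1 + b * ζ : ℂ) ≠ 0 := by
    intro ζ hζ h
    have h1 : (b:ℂ) * ζ = -1 := by linear_combination h
    have h2 : |b| * ‖ζ‖ = 1 := by simpa using congrArg norm h1
    have h3 : ‖ζ‖ < 1 := by simpa using hζ
    nlinarith [abs_nonneg b, norm_nonneg ζ]
  have hmob : ∀ ζ ∈ Metric.ball (0:ℂ) 1, (ζ + b) / (1 + b * ζ) ∈ Metric.ball (0:ℂ) 1 := by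
    intro ζ hζ
    have h3 : ‖ζ‖ < 1 := by simpa using hζ
    have h4 := hden ζ hζ
    rw [mem_ball_zero_iff, norm_div, div_lt_one (norm_pos_iff.2 h4)]
    apply lt_of_pow_lt_pow_left₀ 2 (norm_nonneg _)
    have h5 : ‖ζ‖^2 < 1 := by nlinarith [norm_nonneg ζ]
    rw [Complex.sq_norm, Complex.normSq_apply] at *
    rw [Complex.sq_norm, Complex.normSq_apply]
    simp
    nlinarith [mul_pos (sub_pos.2 h5) (by nlinarith : 0 < 1 - b*b)]
  set G : ℂ → ℂ := fun ζ => (P ((ζ + b) / (1 + b * ζ)) - β) / (P ((ζ + b) / (1 + b * ζ)) + β) with hG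
  have hne : ∀ w ∈ Metric.ball (0:ℂ) 1, P w + β ≠ 0 := by
    intro w hw h
    have := congrArg Complex.re h
    have h2 := hre w hw
    simp at this
    linarith
  have hcomp : DifferentiableOn ℂ (fun ζ : ℂ => P ((ζ + b) / (1 + b * ζ))) (Metric.ball 0 1) := by
    apply hP.comp (f := fun ζ : ℂ => (ζ + b) / (1 + b * ζ)) _ hmob
    apply DifferentiableOn.div (by fun_prop) (by fun_prop) hden
  have hGd : DifferentiableOn ℂ G (Metric.ball 0 1) := by
    apply DifferentiableOn.div (hcomp.sub_const _) (hcomp.add_const _)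
    intro ζ hζ
    exact hne _ (hmob ζ hζ)
  have hG0 : G 0 = 0 := by simp [hG, hPb]
  have hGm : MapsTo G (Metric.ball 0 1) (Metric.closedBall 0 1) := by
    intro ζ hζ
    have h1 := hmob ζ hζ
    have h2 := hne _ h1
    have h3 := hre _ h1
    simp only [hG, mem_closedBall_zero_iff]
    rw [norm_div, div_le_one (norm_pos_iff.2 h2)]
    apply le_of_sq_le_sq _ (norm_nonneg _)
    rw [Complex.sq_norm, Complex.normSq_apply, Complex.sq_norm, Complex.normSq_apply]
    simp
    nlinarith
  set ζ : ℝ := (x - b) / (1 - b * x) with hζ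
  have hζ1 : |ζ| < 1 := by
    rw [hζ, abs_div, abs_of_pos hbx, div_lt_one hbx, abs_lt]
    constructor <;> nlinarith
  have hζx : ((ζ:ℂ) + b) / (1 + b * ζ) = x := by
    have : 1 + b * ζ ≠ 0 := by
      have := abs_lt.1 hζ1
      nlinarith
    have e : (ζ + b) / (1 + b * ζ) = x := by
      have hm : ζ * (1 - b * x) = x - b := by rw [hζ]; exact div_mul_cancel₀ _ hbx.ne'
      rw [div_eq_iff this]; linear_combination hm
    exact_mod_cast e
  have key : ‖G ζ‖ ≤ ‖(ζ:ℂ)‖ :=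
    Complex.norm_le_norm_of_mapsTo_ball hGd hGm hG0 (by simpa using hζ1)
  simp only [hG, hζx, hPx] at key
  have e : ((p:ℂ) - β) / (p + β) = (((p - β) / (p + β) : ℝ) : ℂ) := by push_cast; rfl
  rw [e, Complex.norm_real, Complex.norm_real, Real.norm_eq_abs, Real.norm_eq_abs, hζ, abs_div, abs_div,
    abs_of_pos hbx, abs_of_pos (by linarith : 0 < p + β), div_le_div_iff₀ (by linarith) hbx] at key
  exact key

lemma re_nonneg_aux (F : ℂ → ℂ) (hF : DifferentiableOn ℂ F (Metric.ball 0 1))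
    (him : ∀ w ∈ Metric.ball (0:ℂ) 1, 0 ≤ w.im * (F w).im)
    (hreal : ∀ t : ℝ, |t| < 1 → (F t).im = 0) (a : ℝ) (ha : |a| < 1)
    (w : ℂ) (hw : w ∈ Metric.ball (0:ℂ) 1) :
    0 ≤ ((1 - w^2) / (1 - a * w) * dslope F a w).re := by
  have ha' := abs_lt.1 ha
  have hden : ∀ ζ ∈ Metric.closedBall (0:ℂ) 1, (1 - a * ζ : ℂ) ≠ 0 := by
    intro ζ hζ h
    have h1 : (a:ℂ) * ζ = 1 := by linear_combination -h
    have h2 : |a| * ‖ζ‖ = 1 := by simpa using congrArg norm h1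
    have h3 : ‖ζ‖ ≤ 1 := by simpa using hζ
    nlinarith [abs_nonneg a, norm_nonneg ζ]
  have haB : (a:ℂ) ∈ Metric.ball (0:ℂ) 1 := by simpa using ha
  -- dilated version
  have step1 : ∀ r : ℝ, 0 < r → r < 1 → ∀ w ∈ Metric.ball (0:ℂ) 1, 
      0 ≤ ((1 - w^2) / (1 - a * w) * dslope (fun w => F (r * w)) a w).re := by
    intro r hr hr1 w hw
    set D : ℂ → ℂ := dslope (fun w => F (r * w)) a with hD
    have hmaps : ∀ w ∈ Metric.ball (0:ℂ) r⁻¹, (r:ℂ) * w ∈ Metric.ball (0:ℂ) 1 := by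
      intro w hw
      rw [mem_ball_zero_iff] at *
      rw [norm_mul, Complex.norm_real, Real.norm_eq_abs, abs_of_pos hr]
      calc r * ‖w‖ < r * r⁻¹ := by gcongr
        _ = 1 := mul_inv_cancel₀ hr.ne'
    have hFr : DifferentiableOn ℂ (fun w => F (r * w)) (Metric.ball 0 r⁻¹) :=
      hF.comp (f := fun w : ℂ => (r:ℂ) * w) (by fun_prop) hmaps
    have h1r : 1 < r⁻¹ := (one_lt_inv₀ hr).2 hr1
    have hDd : DifferentiableOn ℂ D (Metric.ball 0 r⁻¹) := by
      rw [hD, Complex.differentiableOn_dslope]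
      · exact hFr
      · apply Metric.isOpen_ball.mem_nhds
        exact Metric.ball_subset_ball h1r.le haB
    have hsub : Metric.closedBall (0:ℂ) 1 ⊆ Metric.ball 0 r⁻¹ := Metric.closedBall_subset_ball h1r
    set E : ℂ → ℂ := fun w => Complex.exp (-((1 - w^2) / (1 - a * w) * D w)) with hE
    have hEd : DifferentiableOn ℂ E (Metric.closedBall 0 1) := by
      apply DifferentiableOn.cexp
      apply DifferentiableOn.neg
      apply DifferentiableOn.mul _ (hDd.mono hsub)
      apply DifferentiableOn.div (by fun_prop) (by fun_prop) hden
    have hEc : DiffContOnCl ℂ E (Metric.ball 0 1) := by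
      apply DifferentiableOn.diffContOnCl
      rwa [closure_ball _ one_ne_zero]
    have hle : ‖E w‖ ≤ 1 := by
      apply Complex.norm_le_of_forall_mem_frontier_norm_le Metric.isBounded_ball hEc _ (subset_closure hw)
      intro z hz
      rw [frontier_ball _ one_ne_zero, mem_sphere_zero_iff_norm] at hz
      rw [hE, Complex.norm_exp, Real.exp_le_one_iff, Complex.neg_re, neg_nonpos]
      have hza : z ≠ a := by
        rintro rfl
        simp at hz; linarith
      have hz2 : z.re * z.re + z.im * z.im = 1 := by
        rw [← Complex.normSq_apply, ← Complex.sq_norm, hz]; norm_num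
      rw [hD, dslope_of_ne _ hza, slope_def_field]
      have hrz : (r:ℂ) * z ∈ Metric.ball (0:ℂ) 1 := hmaps z (hsub (by simp [hz]))
      have h5 := him _ hrz
      have h6 : (F (r * a)).im = 0 := by
        have := hreal (r * a) (by rw [abs_mul, abs_of_pos hr]; nlinarith [abs_nonneg a])
        simpa using this
      have hzc : z * (starRingEnd ℂ) z = 1 := by
        rw [Complex.mul_conj, Complex.normSq_apply, hz2]; simp
      have hN : 0 < Complex.normSq (z - a) := Complex.normSq_pos.2 (sub_ne_zero.2 hza)
      have e : (1 - z^2) / (1 - a * z) * ((F (r * z) - F (r * a)) / (z - a))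
         = ((-2 * z.im / Complex.normSq (z - a) : ℝ) : ℂ) * (Complex.I * (F (r * z) - F (r * a))) := by
        have d1 := hden z (by simp [hz])
        have d2 : z - a ≠ 0 := sub_ne_zero.2 hza
        have z0 : z ≠ 0 := by rintro rfl; simp at hz
        have e1 : (1 - z^2) = z * (-2 * z.im * I) := by
          have : (starRingEnd ℂ) z - z = -2 * z.im * I := by
            apply Complex.ext <;> simp; ring
          rw [← this]; linear_combination -hzc
        have e2 : (1 - a * z) * (z - a) = z * (Complex.normSq (z - a) : ℂ) := by
          rw [← Complex.mul_conj]
          simp only [map_sub, Complex.conj_ofReal]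
          linear_combination -(z-a) * hzc
        have hN' : (Complex.normSq (z - a) : ℂ) ≠ 0 := by exact_mod_cast hN.ne'
        rw [div_mul_div_comm, e2, e1]
        push_cast
        field_simp
      rw [e, Complex.re_ofReal_mul]
      simp only [Complex.I_mul_re, Complex.sub_im, h6]
      simp at h5
      have h7 : 0 ≤ z.im * (F (r * z)).im := by
        by_contra h; push Not at h; nlinarith
      have : -2 * z.im / normSq (z - a) * -((F (r * z)).im - 0) = 2 * (z.im * (F (r * z)).im) / normSq (z - a) := by ring
      rw [this]; positivity
    rw [hE, Complex.norm_exp, Real.exp_le_one_iff, Complex.neg_re, neg_nonpos] at hle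
    exact hle
  have step2 : ∀ w ∈ Metric.ball (0:ℂ) 1, w ≠ a → 0 ≤ ((1 - w^2) / (1 - a * w) * dslope F a w).re := by
    intro w hw hwa
    have hev : ∀ᶠ r : ℝ in nhdsWithin 1 (Iio 1), 0 ≤ ((1 - w^2) / (1 - a * w) * ((F (r * w) - F (r * a)) / (w - a))).re := by
      filter_upwards [Ioo_mem_nhdsLT (zero_lt_one' ℝ)] with r hr
      have := step1 r hr.1 hr.2 w hw
      rwa [dslope_of_ne _ hwa, slope_def_field] at this
    have hc : ∀ v ∈ Metric.ball (0:ℂ) 1, ContinuousAt (fun r : ℝ => F (r * v)) 1 := by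
      intro v hv
      have h1 : ContinuousAt F (((1:ℝ):ℂ) * v) := by
        have := (hF.differentiableAt (Metric.isOpen_ball.mem_nhds hv)).continuousAt
        simpa using this
      exact ContinuousAt.comp (f := fun r : ℝ => (r:ℂ) * v) h1 (by fun_prop)
    have ht : ContinuousAt (fun r : ℝ => ((1 - w^2) / (1 - a * w) * ((F (r * w) - F (r * a)) / (w - a))).re) 1 := by
      apply Complex.continuous_re.continuousAt.comp
      apply ContinuousAt.mul continuousAt_const
      exact ((hc w hw).sub (hc a haB)).div_const _
    have := ge_of_tendsto (ht.tendsto.mono_left nhdsWithin_le_nhds) hev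
    rw [dslope_of_ne _ hwa, slope_def_field]
    simpa using this
  by_cases hwa : w = a
  · subst hwa
    have hev : ∀ᶠ z : ℂ in nhdsWithin (a:ℂ) {(a:ℂ)}ᶜ, 0 ≤ ((1 - z^2) / (1 - a * z) * dslope F a z).re := by
      filter_upwards [self_mem_nhdsWithin, mem_nhdsWithin_of_mem_nhds (Metric.isOpen_ball.mem_nhds haB)] with z h1 h2
      exact step2 z h2 h1
    have hdc : ContinuousAt (dslope F a) a := 
      continuousAt_dslope_same.2 (hF.differentiableAt (Metric.isOpen_ball.mem_nhds haB))
    have ht : ContinuousAt (fun z : ℂ => ((1 - z^2) / (1 - a * z) * dslope F a z).re) a := by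
      apply Complex.continuous_re.continuousAt.comp
      apply ContinuousAt.mul _ hdc
      apply ContinuousAt.div (by fun_prop) (by fun_prop)
      exact hden a (Metric.ball_subset_closedBall haB)
    exact ge_of_tendsto (ht.tendsto.mono_left nhdsWithin_le_nhds) hev
  · exact step2 w hw hwa

lemma exists_w (x : ℝ) (h : -1 < x) (h' : x < 1) : ∃ w : ℝ, |w| < 1 ∧ x = 2 * w / (1 + w^2) := by
  have hs : 0 < Real.sqrt (1 - x^2) := Real.sqrt_pos.2 (by nlinarith)
  have hs2 : Real.sqrt (1 - x^2) ^ 2 = 1 - x^2 := Real.sq_sqrt (by nlinarith)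
  set s := Real.sqrt (1 - x^2)
  refine ⟨x / (1 + s), ?_, ?_⟩
  · rw [abs_div, abs_of_pos (by linarith : 0 < 1 + s), div_lt_one (by linarith), abs_lt]
    constructor <;> linarith
  · have : (1 + s)^2 + x^2 ≠ 0 := by positivity
    field_simp
    linear_combination x * hs2

lemma map_mem (w : ℂ) (hw : w ∈ Metric.ball (0:ℂ) 1) :
    1 + w^2 ≠ 0 ∧ 2 * w / (1 + w^2) ∈ C1 ∧
      ∃ k : ℝ, 0 < k ∧ (2 * w / (1 + w^2)).im = k * w.im := by
  have h3 : ‖w‖ < 1 := by simpa using hw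
  have hne : 1 + w^2 ≠ 0 := by
    intro h
    have h1 : w^2 = -1 := by linear_combination h
    have h2 : ‖w‖^2 = 1 := by simpa using congrArg norm h1
    nlinarith [norm_nonneg w]
  have h5 : ‖w‖^2 < 1 := by nlinarith [norm_nonneg w]
  rw [Complex.sq_norm, Complex.normSq_apply] at h5
  have hN : 0 < Complex.normSq (1 + w^2) := Complex.normSq_pos.2 hne
  have him : (2 * w / (1 + w^2)).im
      = (2 * (1 - (w.re * w.re + w.im * w.im)) / Complex.normSq (1 + w^2)) * w.im := by
    rw [Complex.div_im]
    simp [pow_two]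
    field_simp
    ring
  have hk : 0 < 2 * (1 - (w.re * w.re + w.im * w.im)) / Complex.normSq (1 + w^2) :=
    div_pos (by linarith) hN
  refine ⟨hne, ?_, _, hk, him⟩
  by_cases h0 : w.im = 0
  · right
    have e : w = (w.re : ℂ) := by apply Complex.ext <;> simp [h0]
    have e2 : 2 * w / (1 + w^2) = ((2 * w.re / (1 + w.re^2) : ℝ) : ℂ) := by
      rw [e]; push_cast; simp
    rw [e2, Complex.ofReal_re]
    rw [h0] at h5
    have h6 : -1 < w.re ∧ w.re < 1 := by constructor <;> nlinarith
    have hp : 0 < 1 + w.re^2 := by positivity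
    constructor
    · rw [lt_div_iff₀ hp]; nlinarith
    · rw [div_lt_iff₀ hp]; nlinarith
  · left
    rw [him]
    exact mul_ne_zero hk.ne' h0

set_option maxHeartbeats 2000000 in
theorem stmt5 (c₁ c₂ c₃ c₄ : ℝ)
    (h1 : -1 < c₁) (h12 : c₁ < c₂) (h2 : c₂ < 1)
    (h3 : -1 < c₃) (h34 : c₃ < c₄) (h4 : c₄ < 1)
    (f : ℂ → ℂ) (hf : MemA1 c₁ c₂ c₃ c₄ f) :
    (∀ x : ℝ, x ∈ Set.Ioo (-1 : ℝ) c₂ → x ≠ c₁ →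
      ((c₄ - c₃) / (c₂ - c₁)) * ((1 - c₂) / (1 - x)) ≤ ((f x).re - c₃) / (x - c₁) ∧
      ((f x).re - c₃) / (x - c₁) ≤ ((c₄ - c₃) / (c₂ - c₁)) * ((1 + c₂) / (1 + x))) ∧
    (∀ x : ℝ, x ∈ Set.Ioo c₂ (1 : ℝ) →
      ((c₄ - c₃) / (c₂ - c₁)) * ((1 + c₂) / (1 + x)) ≤ ((f x).re - c₃) / (x - c₁) ∧
      ((f x).re - c₃) / (x - c₁) ≤ ((c₄ - c₃) / (c₂ - c₁)) * ((1 - c₂) / (1 - x))) := by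
  obtain ⟨a, ha, hac⟩ := exists_w c₁ h1 (h12.trans h2)
  obtain ⟨b, hb, hbc⟩ := exists_w c₂ (h1.trans h12) h2
  have ha' := abs_lt.1 ha
  have hb' := abs_lt.1 hb
  have hfr : ∀ x : ℝ, -1 < x → x < 1 → (f x).im = 0 := by
    intro x hx hx'
    have := hf.symm (x:ℂ) (Or.inr (by simpa using ⟨hx, hx'⟩))
    rw [Complex.conj_ofReal] at this
    have := congrArg Complex.im this
    simp at this
    linarith
  set F : ℂ → ℂ := fun w => f (2 * w / (1 + w^2)) with hFdef
  have hFx : ∀ w : ℝ, F w = f ((2 * w / (1 + w^2) : ℝ) : ℂ) := by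
    intro w; simp [hFdef]
  have hF : DifferentiableOn ℂ F (Metric.ball 0 1) := by
    apply hf.holo.comp (f := fun w : ℂ => 2 * w / (1 + w^2))
    · exact DifferentiableOn.div (by fun_prop) (by fun_prop) (fun w hw => (map_mem w hw).1)
    · exact fun w hw => (map_mem w hw).2.1
  have hreal : ∀ t : ℝ, |t| < 1 → (F t).im = 0 := by
    intro t ht
    have ht' := abs_lt.1 ht
    rw [hFx]
    have hp : 0 < 1 + t^2 := by positivity
    apply hfr
    · rw [lt_div_iff₀ hp]; nlinarith
    · rw [div_lt_iff₀ hp]; nlinarith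
  have him : ∀ w ∈ Metric.ball (0:ℂ) 1, 0 ≤ w.im * (F w).im := by
    intro w hw
    obtain ⟨-, hm, k, hk, hki⟩ := map_mem w hw
    rcases lt_trichotomy w.im 0 with h | h | h
    · have := hf.lower _ hm (by rw [hki]; exact mul_neg_of_pos_of_neg hk h)
      exact mul_nonneg_of_nonpos_of_nonpos h.le this
    · simp [h]
    · have := hf.upper _ hm (by rw [hki]; positivity)
      exact mul_nonneg h.le this
  have haB : (a:ℂ) ∈ Metric.ball (0:ℂ) 1 := by simpa using ha
  have hFa : F a = c₃ := by rw [hFx, ← hac, hf.val1]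
  set P : ℂ → ℂ := fun w => (1 - w^2) / (1 - a * w) * dslope F a w with hPdef
  have hPre : ∀ w ∈ Metric.ball (0:ℂ) 1, 0 ≤ (P w).re := re_nonneg_aux F hF him hreal a ha
  have hPd : DifferentiableOn ℂ P (Metric.ball 0 1) := by
    apply DifferentiableOn.mul
    · apply DifferentiableOn.div (by fun_prop) (by fun_prop)
      intro ζ hζ h
      have h1 : (a:ℂ) * ζ = 1 := by linear_combination -h
      have h2 : |a| * ‖ζ‖ = 1 := by simpa using congrArg norm h1
      have h3 : ‖ζ‖ < 1 := by simpa using hζ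
      nlinarith [abs_nonneg a, norm_nonneg ζ]
    · exact (Complex.differentiableOn_dslope (Metric.isOpen_ball.mem_nhds haB)).2 hF
  -- value of P at real points
  have hPv : ∀ x w : ℝ, |w| < 1 → x = 2 * w / (1 + w^2) → x ≠ c₁ →
      P w = ((((f x).re - c₃) / (x - c₁) * (2 * (1 - w^2) / ((1 + w^2) * (1 + a^2))) : ℝ) : ℂ) := by
    intro x w hw hxw hxc
    have hw' := abs_lt.1 hw
    have hwa : w ≠ a := by rintro rfl; exact hxc (hxw.trans hac.symm)
    have hwa' : (w:ℂ) ≠ a := by exact_mod_cast hwa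
    have hFw : F w = (((f x).re : ℝ) : ℂ) := by
      have h := hreal w hw
      rw [hFx, ← hxw] at h ⊢
      apply Complex.ext <;> simp [h]
    simp only [hPdef]
    rw [dslope_of_ne _ hwa', slope_def_field, hFw, hFa]
    norm_cast
    have d1 : 1 - a * w ≠ 0 := by nlinarith
    have d2 : w - a ≠ 0 := sub_ne_zero.2 hwa
    have p1 : 1 + w^2 ≠ 0 := by positivity
    have p2 : 1 + a^2 ≠ 0 := by positivity
    have e : x - c₁ = 2 * (w - a) * (1 - a * w) / ((1 + w^2) * (1 + a^2)) := by
      rw [hxw, hac]; field_simp; ring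
    rw [e]
    field_simp
  have hH : 0 < (c₄ - c₃) / (c₂ - c₁) := div_pos (by linarith) (by linarith)
  have hPb := hPv c₂ b hb hbc h12.ne'
  rw [hf.val2, Complex.ofReal_re] at hPb
  set H := (c₄ - c₃) / (c₂ - c₁) with hHd
  have hK : 0 < 1 + a^2 := by positivity
  have main : ∀ x w : ℝ, |w| < 1 → x = 2 * w / (1 + w^2) → x ≠ c₁ →
      |((f x).re - c₃) / (x - c₁) * ((1 - w^2) / (1 + w^2)) - H * ((1 - b^2) / (1 + b^2))| * (1 - b * w)
        ≤ |w - b| * (((f x).re - c₃) / (x - c₁) * ((1 - w^2) / (1 + w^2)) + H * ((1 - b^2) / (1 + b^2))) := by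
    intro x w hw hxw hxc
    have hβ : 0 < H * (2 * (1 - b^2) / ((1 + b^2) * (1 + a^2))) := by
      have : 0 < 1 - b^2 := by nlinarith
      positivity
    have := harnack_aux P hPd hPre b _ w _ hb hw hβ hPb (hPv x w hw hxw hxc)
    set h := ((f x).re - c₃) / (x - c₁)
    have e1 : ∀ t : ℝ, 2 * (1 - t^2) / ((1 + t^2) * (1 + a^2)) = (2 / (1 + a^2)) * ((1 - t^2) / (1 + t^2)) := by
      intro t; field_simp
    have hk2 : 0 < 2 / (1 + a^2) := by positivity
    rw [e1, e1] at this
    generalize 2 / (1 + a^2) = k at this hk2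
    generalize (1 - w^2) / (1 + w^2) = u at this ⊢
    generalize (1 - b^2) / (1 + b^2) = v at this ⊢
    have e2 : h * (k * u) - H * (k * v) = k * (h * u - H * v) := by ring
    rw [e2, abs_mul, abs_of_pos hk2] at this
    apply le_of_mul_le_mul_left _ hk2
    linarith
  have b1 : 1 - c₂ = (1 - b)^2 / (1 + b^2) := by rw [hbc]; field_simp; ring
  have b2 : 1 + c₂ = (1 + b)^2 / (1 + b^2) := by rw [hbc]; field_simp; ring
  have order : ∀ x w : ℝ, |w| < 1 → x = 2 * w / (1 + w^2) → ∃ k : ℝ, 0 < k ∧ c₂ - x = k * (b - w) := by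
    intro x w hw hxw
    have hw' := abs_lt.1 hw
    have d1 : 0 < 1 - b * w := by nlinarith
    refine ⟨2 * (1 - b * w) / ((1 + w^2) * (1 + b^2)), by positivity, ?_⟩
    rw [hxw, hbc]; field_simp; ring
  have pb : 0 < 1 + b^2 := by positivity
  constructor
  · intro x hx hxc
    have hx1 : x < 1 := hx.2.trans h2
    obtain ⟨w, hw, hxw⟩ := exists_w x hx.1 hx1
    have hw' := abs_lt.1 hw
    obtain ⟨k, hk, hko⟩ := order x w hw hxw
    have hwb : w < b := by
      by_contra hcon; push Not at hcon
      nlinarith [hx.2]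
    have m := main x w hw hxw hxc
    set h := ((f x).re - c₃) / (x - c₁)
    have x1 : 1 - x = (1 - w)^2 / (1 + w^2) := by rw [hxw]; field_simp; ring
    have x2 : 1 + x = (1 + w)^2 / (1 + w^2) := by rw [hxw]; field_simp; ring
    have pw : 0 < 1 + w^2 := by positivity
    rw [abs_of_neg (by linarith : w - b < 0)] at m
    have d1 : 0 < 1 - b * w := by nlinarith
    have m1 := (neg_le_neg m).trans ((neg_mul _ _).symm.trans_le (mul_le_mul_of_nonneg_right (neg_abs_le _) d1.le))
    have m2 := (mul_le_mul_of_nonneg_right (le_abs_self _) d1.le).trans m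
    constructor
    · rw [← mul_div_assoc, div_le_iff₀ (by linarith), b1, x1]
      have : 0 < (1 + w) * (1 + b) := mul_pos (by linarith) (by linarith)
      apply le_of_mul_le_mul_left _ this
      have e1 : (1 + w) * (1 + b) * (H * ((1 - b)^2 / (1 + b^2))) = H * ((1 - b^2) / (1 + b^2)) * ((1 - b) * (1 + w)) := by ring
      have e2 : (1 + w) * (1 + b) * (h * ((1 - w)^2 / (1 + w^2))) = h * ((1 - w^2) / (1 + w^2)) * ((1 + b) * (1 - w)) := by ring
      rw [e1, e2]
      linarith
    · rw [← mul_div_assoc, le_div_iff₀ (by linarith [hx.1]), b2, x2]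
      have : 0 < (1 - w) * (1 - b) := mul_pos (by linarith) (by linarith)
      apply le_of_mul_le_mul_left _ this
      have e1 : (1 - w) * (1 - b) * (H * ((1 + b)^2 / (1 + b^2))) = H * ((1 - b^2) / (1 + b^2)) * ((1 + b) * (1 - w)) := by ring
      have e2 : (1 - w) * (1 - b) * (h * ((1 + w)^2 / (1 + w^2))) = h * ((1 - w^2) / (1 + w^2)) * ((1 - b) * (1 + w)) := by ring
      rw [e1, e2]
      linarith
  · intro x hx
    have hx0 : -1 < x := by linarith [hx.1]
    have hxc : x ≠ c₁ := (h12.trans hx.1).ne'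
    obtain ⟨w, hw, hxw⟩ := exists_w x hx0 hx.2
    have hw' := abs_lt.1 hw
    obtain ⟨k, hk, hko⟩ := order x w hw hxw
    have hwb : b < w := by
      by_contra hcon; push Not at hcon
      nlinarith [hx.1]
    have m := main x w hw hxw hxc
    set h := ((f x).re - c₃) / (x - c₁)
    have x1 : 1 - x = (1 - w)^2 / (1 + w^2) := by rw [hxw]; field_simp; ring
    have x2 : 1 + x = (1 + w)^2 / (1 + w^2) := by rw [hxw]; field_simp; ring
    have pw : 0 < 1 + w^2 := by positivity
    rw [abs_of_pos (by linarith : 0 < w - b)] at m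
    have d1 : 0 < 1 - b * w := by nlinarith
    have m1 := (neg_le_neg m).trans ((neg_mul _ _).symm.trans_le (mul_le_mul_of_nonneg_right (neg_abs_le _) d1.le))
    have m2 := (mul_le_mul_of_nonneg_right (le_abs_self _) d1.le).trans m
    constructor
    · rw [← mul_div_assoc, div_le_iff₀ (by linarith), b2, x2]
      have : 0 < (1 - w) * (1 - b) := mul_pos (by linarith) (by linarith)
      apply le_of_mul_le_mul_left _ this
      have e1 : (1 - w) * (1 - b) * (H * ((1 + b)^2 / (1 + b^2))) = H * ((1 - b^2) / (1 + b^2)) * ((1 + b) * (1 - w)) := by ring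
      have e2 : (1 - w) * (1 - b) * (h * ((1 + w)^2 / (1 + w^2))) = h * ((1 - w^2) / (1 + w^2)) * ((1 - b) * (1 + w)) := by ring
      rw [e1, e2]
      linarith
    · rw [← mul_div_assoc, le_div_iff₀ (by linarith [hx.2]), b1, x1]
      have : 0 < (1 + w) * (1 + b) := mul_pos (by linarith) (by linarith)
      apply le_of_mul_le_mul_left _ this
      have e1 : (1 + w) * (1 + b) * (H * ((1 - b)^2 / (1 + b^2))) = H * ((1 - b^2) / (1 + b^2)) * ((1 - b) * (1 + w)) := by ring
      have e2 : (1 + w) * (1 + b) * (h * ((1 - w)^2 / (1 + w^2))) = h * ((1 - w^2) / (1 + w^2)) * ((1 + b) * (1 - w)) := by ring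
      rw [e1, e2]
      linarith
end
end

section
/- Let f ∈ A₁(c). Then for every x ∈ (−1,1): −2·f′(x)/(1+x) ≤ f″(x) ≤ 2·f′(x)/(1−x). -/
open Set Complex

noncomputable section

open Set Complex Metric in
lemma coefA (g : ℂ → ℂ) (r e : ℝ) (hr : 0 < r) (he : |e| ≤ 1)
    (hg : DifferentiableOn ℂ g (closedBall 0 r))
    (hpos : ∀ z ∈ sphere (0:ℂ) r, 0 ≤ z.im * (g z).im) :
    0 ≤ 2 * r * (deriv g 0).re + e * r ^ 2 * (deriv (deriv g) 0).re / 2 := by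
  have hrC : (r : ℂ) ≠ 0 := by exact_mod_cast hr.ne'
  have hgs : ContinuousOn g (sphere 0 r) := hg.continuousOn.mono sphere_subset_closedBall
  have hz0 : ∀ z ∈ sphere (0:ℂ) r, z ≠ 0 := by
    rintro z hz rfl; simp at hz; exact hr.ne hz
  have I1 := hg.circleIntegral_one_div_sub_center_pow_smul hr 1
  have I2 := hg.circleIntegral_one_div_sub_center_pow_smul hr 2
  have I3 : (∮ z in C(0, r), g z * (2 / r + e * z / r ^ 2)) = 0 := by
    have : DifferentiableOn ℂ (fun z => g z * (2 / r + e * z / r ^ 2)) (closedBall 0 r) :=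
      hg.mul (by fun_prop)
    exact (this.mono closure_ball_subset_closedBall).diffContOnCl.circleIntegral_eq_zero hr.le
  simp only [sub_zero, smul_eq_mul, iteratedDeriv_succ, iteratedDeriv_zero] at I1 I2
  have c1 : ContinuousOn (fun z => (2 * r : ℂ) * (1 / z ^ (1+1) * g z)) (sphere 0 r) := by
    refine continuousOn_const.mul (ContinuousOn.mul (ContinuousOn.div continuousOn_const (by fun_prop) ?_) hgs)
    intro z hz; exact pow_ne_zero _ (hz0 z hz)
  have c2 : ContinuousOn (fun z => (e * r^2 : ℂ) * (1 / z ^ (2+1) * g z)) (sphere 0 r) := by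
    refine continuousOn_const.mul (ContinuousOn.mul (ContinuousOn.div continuousOn_const (by fun_prop) ?_) hgs)
    intro z hz; exact pow_ne_zero _ (hz0 z hz)
  have c3 : ContinuousOn (fun z => g z * (2 / r + e * z / r ^ 2 : ℂ)) (sphere 0 r) :=
    hgs.mul (by fun_prop)
  have key : (∮ z in C(0, r), ((2 * r : ℂ) * (1 / z ^ (1+1) * g z) + (e * r^2 : ℂ) * (1 / z ^ (2+1) * g z))
      - g z * (2 / r + e * z / r ^ 2 : ℂ)) = 
      2 * Real.pi * I * (2 * r * deriv g 0 + e * r ^ 2 * deriv (deriv g) 0 / 2) := by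
    have c12 : ContinuousOn (fun z => (2 * r : ℂ) * (1 / z ^ (1+1) * g z) + (e * r^2 : ℂ) * (1 / z ^ (2+1) * g z)) (sphere 0 r) := c1.add c2
    rw [circleIntegral.integral_sub (c12.circleIntegrable hr.le) (c3.circleIntegrable hr.le),
      circleIntegral.integral_add (c1.circleIntegrable hr.le) (c2.circleIntegrable hr.le), I3,
      circleIntegral.integral_const_mul, circleIntegral.integral_const_mul, I1, I2]
    simp [Nat.factorial]
    ring
  have hmem : ∀ θ : ℝ, circleMap 0 r θ ∈ sphere (0:ℂ) r := fun θ => circleMap_mem_sphere _ hr.le θ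
  have hcont : Continuous (fun θ : ℝ => g (circleMap 0 r θ)) :=
    hgs.comp_continuous (continuous_circleMap 0 r) hmem
  rw [circleIntegral] at key
  have hint : ∀ θ : ℝ, deriv (circleMap 0 r) θ • (((2 * r : ℂ) * (1 / (circleMap 0 r θ) ^ (1+1) * g (circleMap 0 r θ)) + (e * r^2 : ℂ) * (1 / (circleMap 0 r θ) ^ (2+1) * g (circleMap 0 r θ)))
      - g (circleMap 0 r θ) * (2 / r + e * (circleMap 0 r θ) / r ^ 2 : ℂ)) = 
      ((4 * Real.sin θ * (1 + e * Real.cos θ) : ℝ) : ℂ) * g (circleMap 0 r θ) := by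
    intro θ
    have hE : Complex.exp (θ * I) ≠ 0 := Complex.exp_ne_zero _
    rw [deriv_circleMap]
    generalize g (circleMap 0 r θ) = G
    simp only [circleMap, zero_add, smul_eq_mul]
    push_cast
    rw [Complex.sin, Complex.cos, neg_mul, Complex.exp_neg]
    generalize Complex.exp (θ * I) = E at *
    field_simp
    ring_nf
    try simp only [Complex.I_sq]
    try ring
  simp only [hint] at key
  have him := congrArg Complex.im key
  have hcI : Continuous (fun θ : ℝ => ((4 * Real.sin θ * (1 + e * Real.cos θ) : ℝ) : ℂ) * g (circleMap 0 r θ)) :=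
    (by fun_prop : Continuous (fun θ : ℝ => ((4 * Real.sin θ * (1 + e * Real.cos θ) : ℝ) : ℂ))).mul hcont
  have h1 := imCLM.intervalIntegral_comp_comm (hcI.intervalIntegrable (μ := MeasureTheory.volume) 0 (2 * Real.pi))
  simp only [imCLM_apply] at h1
  rw [← h1] at him
  have hnn : 0 ≤ ∫ θ in (0:ℝ)..(2 * Real.pi), (((4 * Real.sin θ * (1 + e * Real.cos θ) : ℝ) : ℂ) * g (circleMap 0 r θ)).im := by
    apply intervalIntegral.integral_nonneg Real.two_pi_pos.le
    intro θ _
    rw [Complex.im_ofReal_mul]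
    have h2 := hpos _ (hmem θ)
    have h3 : (circleMap 0 r θ).im = r * Real.sin θ := by
      simp [circleMap, Complex.exp_ofReal_mul_I_im]
    rw [h3, mul_assoc] at h2
    have h4 : 0 ≤ Real.sin θ * (g (circleMap 0 r θ)).im := nonneg_of_mul_nonneg_right h2 hr
    have h5 : 0 ≤ 1 + e * Real.cos θ := by
      have : |e * Real.cos θ| ≤ 1 := by
        rw [abs_mul]; exact mul_le_one₀ he (abs_nonneg _) (Real.abs_cos_le_one θ)
      linarith [(abs_le.1 this).1]
    nlinarith [mul_nonneg h4 h5]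
  rw [him] at hnn
  have h6 : (2 * Real.pi * I * (2 * r * deriv g 0 + e * r ^ 2 * deriv (deriv g) 0 / 2)).im =
      2 * Real.pi * (2 * r * (deriv g 0).re + e * r ^ 2 * (deriv (deriv g) 0).re / 2) := by
    have : 2 * Real.pi * I * (2 * r * deriv g 0 + e * r ^ 2 * deriv (deriv g) 0 / 2) = 
      ((2 * Real.pi:ℝ):ℂ) * (I * (((2 * r:ℝ):ℂ) * deriv g 0 + ((e * r ^ 2 / 2:ℝ):ℂ) * deriv (deriv g) 0)) := by
      push_cast; ring
    rw [this, Complex.im_ofReal_mul, Complex.I_mul_im, Complex.add_re, Complex.re_ofReal_mul, Complex.re_ofReal_mul]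
    ring
  rw [h6] at hnn
  exact nonneg_of_mul_nonneg_right hnn Real.two_pi_pos

open Set Complex Metric in
lemma coefB (g : ℂ → ℂ) (e : ℝ) (he : |e| ≤ 1)
    (hg : DifferentiableOn ℂ g (ball 0 1))
    (hpos : ∀ z ∈ ball (0:ℂ) 1, 0 ≤ z.im * (g z).im) :
    0 ≤ 2 * (deriv g 0).re + e * (deriv (deriv g) 0).re / 2 := by
  have h : ∀ r ∈ Ioo (0:ℝ) 1, 0 ≤ 2 * r * (deriv g 0).re + e * r ^ 2 * (deriv (deriv g) 0).re / 2 := by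
    intro r hr
    have hs : closedBall (0:ℂ) r ⊆ ball 0 1 := closedBall_subset_ball hr.2
    exact coefA g r e hr.1 he (hg.mono hs) fun z hz => hpos z (hs (sphere_subset_closedBall hz))
  have hc : Continuous (fun r : ℝ => 2 * r * (deriv g 0).re + e * r ^ 2 * (deriv (deriv g) 0).re / 2) := by
    fun_prop
  have ht := (hc.tendsto 1).mono_left (nhdsWithin_le_nhds (s := Iio 1))
  have := ge_of_tendsto ht (by
    filter_upwards [Ioo_mem_nhdsLT (show (0:ℝ) < 1 by norm_num)] with r hr using h r hr)
  simpa using this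

lemma phi_den (x : ℝ) (hx : x ∈ Ioo (-1:ℝ) 1) (z : ℂ) (hz : z ∈ Metric.ball (0:ℂ) 1) :
    1 + 2 * x * z + z ^ 2 ≠ 0 := by
  intro h
  have hn : z.re ^ 2 + z.im ^ 2 < 1 := by
    have h1 : ‖z‖ < 1 := by simpa using hz
    have h2 := Complex.sq_norm z
    rw [Complex.normSq_apply] at h2
    nlinarith [norm_nonneg z]
  have hre := congrArg Complex.re h
  have him := congrArg Complex.im h
  simp [pow_two] at hre him
  obtain ⟨hx1, hx2⟩ := hx
  have : z.im * (z.re + x) = 0 := by linarith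
  rcases mul_eq_zero.1 this with h0 | h0
  · rw [h0] at hre; nlinarith [sq_nonneg (z.re + x)]
  · have : z.re = -x := by linarith
    rw [this] at hre hn
    nlinarith

lemma phi_im (x : ℝ) (z : ℂ) (hD : 1 + 2 * x * z + z ^ 2 ≠ 0) :
    ((x : ℂ) + 2 * (1 - x ^ 2) * z / (1 + 2 * x * z + z ^ 2)).im =
      2 * (1 - x ^ 2) / Complex.normSq (1 + 2 * x * z + z ^ 2) * (1 - z.re ^ 2 - z.im ^ 2) * z.im := by
  have hN : Complex.normSq (1 + 2 * x * z + z ^ 2) ≠ 0 := by simpa using hD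
  have : (2 * (1 - x ^ 2) * z : ℂ) = ((2 * (1 - x^2) : ℝ) : ℂ) * z := by push_cast; ring
  rw [this, Complex.add_im, Complex.div_im]
  field_simp
  simp [pow_two]
  ring

lemma phi_maps (x : ℝ) (hx : x ∈ Ioo (-1:ℝ) 1) (z : ℂ) (hz : z ∈ Metric.ball (0:ℂ) 1) :
    ((x : ℂ) + 2 * (1 - x ^ 2) * z / (1 + 2 * x * z + z ^ 2)) ∈ C1 ∧
    ∃ k : ℝ, 0 < k ∧ ((x : ℂ) + 2 * (1 - x ^ 2) * z / (1 + 2 * x * z + z ^ 2)).im = k * z.im := by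
  have hD := phi_den x hx z hz
  have hI := phi_im x z hD
  have hn : z.re ^ 2 + z.im ^ 2 < 1 := by
    have h1 : ‖z‖ < 1 := by simpa using hz
    have h2 := Complex.sq_norm z
    rw [Complex.normSq_apply] at h2
    nlinarith [norm_nonneg z]
  have hx2 : 0 < 1 - x ^ 2 := by nlinarith [hx.1, hx.2]
  have hk : 0 < 2 * (1 - x ^ 2) / Complex.normSq (1 + 2 * x * z + z ^ 2) * (1 - z.re ^ 2 - z.im ^ 2) := by
    have : 0 < Complex.normSq (1 + 2 * x * z + z ^ 2) := Complex.normSq_pos.2 hD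
    have : 0 < 1 - z.re ^ 2 - z.im ^ 2 := by linarith
    positivity
  refine ⟨?_, _, hk, hI⟩
  by_cases h0 : z.im = 0
  · right
    have hzr : z = (z.re : ℂ) := by apply Complex.ext <;> simp [h0]
    set s := z.re
    rw [h0] at hn
    have hs : s ^ 2 < 1 := by linarith
    have hs' := abs_lt.1 ((sq_lt_one_iff_abs_lt_one s).1 hs)
    have hd : 0 < 1 + 2 * x * s + s ^ 2 := by nlinarith [sq_nonneg (s + x)]
    have : ((x : ℂ) + 2 * (1 - x ^ 2) * z / (1 + 2 * x * z + z ^ 2)) = ((x + 2 * (1 - x^2) * s / (1 + 2 * x * s + s ^ 2) : ℝ) : ℂ) := by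
      rw [hzr]; push_cast; rfl
    rw [this, Complex.ofReal_re]
    have hdne : 1 + 2 * x * s + s ^ 2 ≠ 0 := hd.ne'
    have hQ := div_mul_cancel₀ (2 * (1 - x^2) * s) hdne
    have e1 : 1 - (x + 2 * (1 - x^2) * s / (1 + 2 * x * s + s ^ 2)) = (1 - x) * (1 - s)^2 / (1 + 2 * x * s + s ^ 2) := by
      rw [eq_div_iff hdne]; linear_combination (-1) * hQ
    have e2 : 1 + (x + 2 * (1 - x^2) * s / (1 + 2 * x * s + s ^ 2)) = (1 + x) * (1 + s)^2 / (1 + 2 * x * s + s ^ 2) := by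
      rw [eq_div_iff hdne]; linear_combination hQ
    have a1 : 0 < 1 - x := by linarith [hx.2]
    have a2 : 0 < 1 + x := by linarith [hx.1]
    have a3 : 0 < 1 - s := by linarith [hs'.2]
    have a4 : 0 < 1 + s := by linarith [hs'.1]
    have p1 : 0 < (1 - x) * (1 - s)^2 / (1 + 2 * x * s + s ^ 2) := by positivity
    have p2 : 0 < (1 + x) * (1 + s)^2 / (1 + 2 * x * s + s ^ 2) := by positivity
    constructor <;> linarith
  · left
    rw [hI]
    exact mul_ne_zero hk.ne' h0

lemma isOpen_C1 : IsOpen C1 := by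
  have : C1 = {z : ℂ | z.im ≠ 0} ∪ Complex.re ⁻¹' (Ioo (-1) 1) := by
    ext z; rfl
  rw [this]
  exact (isOpen_ne_fun Complex.continuous_im continuous_const).union
    (isOpen_Ioo.preimage Complex.continuous_re)

lemma mem_C1_real (x : ℝ) (hx : x ∈ Ioo (-1:ℝ) 1) : (x : ℂ) ∈ C1 := Or.inr (by simpa using hx)

theorem stmt7 (c₁ c₂ c₃ c₄ : ℝ)
    (h1 : -1 < c₁) (h12 : c₁ < c₂) (h2 : c₂ < 1)
    (h3 : -1 < c₃) (h34 : c₃ < c₄) (h4 : c₄ < 1)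
    (f : ℂ → ℂ) (hf : MemA1 c₁ c₂ c₃ c₄ f) :
    ∀ x ∈ Set.Ioo (-1 : ℝ) 1,
      -2 * deriv (fun y : ℝ => (f y).re) x / (1 + x) ≤
          deriv (deriv (fun y : ℝ => (f y).re)) x ∧
        deriv (deriv (fun y : ℝ => (f y).re)) x ≤
          2 * deriv (fun y : ℝ => (f y).re) x / (1 - x) := by
  intro x hx
  have hd1 : ∀ z ∈ C1, HasDerivAt f (deriv f z) z := fun z hz =>
    (hf.holo.differentiableAt (isOpen_C1.mem_nhds hz)).hasDerivAt
  have hd2 : ∀ z ∈ C1, HasDerivAt (deriv f) (deriv (deriv f) z) z := fun z hz =>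
    ((hf.holo.deriv isOpen_C1).differentiableAt (isOpen_C1.mem_nhds hz)).hasDerivAt
  have r1 : ∀ y ∈ Ioo (-1:ℝ) 1, deriv (fun y : ℝ => (f y).re) y = (deriv f y).re := fun y hy =>
    (hd1 y (mem_C1_real y hy)).real_of_complex.deriv
  have r2 : deriv (deriv (fun y : ℝ => (f y).re)) x = (deriv (deriv f) x).re := by
    have : deriv (fun y : ℝ => (f y).re) =ᶠ[nhds x] fun y : ℝ => (deriv f y).re := by
      filter_upwards [isOpen_Ioo.mem_nhds hx] with y hy using r1 y hy
    rw [this.deriv_eq]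
    exact (hd2 x (mem_C1_real x hx)).real_of_complex.deriv
  rw [r1 x hx, r2]
  set p : ℂ → ℂ := fun z => (x : ℂ) + 2 * (1 - x ^ 2) * z / (1 + 2 * x * z + z ^ 2) with hp
  have hp1 : ∀ z ∈ Metric.ball (0:ℂ) 1, HasDerivAt p
      (2 * (1 - x ^ 2) * (1 - z ^ 2) / (1 + 2 * x * z + z ^ 2) ^ 2) z := by
    intro z hz
    have hD := phi_den x hx z hz
    have hn : HasDerivAt (fun z : ℂ => 2 * (1 - (x:ℂ) ^ 2) * z) (2 * (1 - (x:ℂ) ^ 2) * 1) z :=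
      (hasDerivAt_id z).const_mul _
    have hden : HasDerivAt (fun z : ℂ => 1 + 2 * (x:ℂ) * z + z ^ 2) (2 * x * 1 + 2 * z) z := by
      have a := ((hasDerivAt_id z).const_mul (2 * (x:ℂ))).const_add 1
      have b := hasDerivAt_pow 2 z
      simpa using! a.add b
    have := (hn.div hden hD).const_add (x : ℂ)
    convert! this using 1
    field_simp
    ring
  have hp2 : HasDerivAt (fun z : ℂ => 2 * (1 - (x:ℂ) ^ 2) * (1 - z ^ 2) / (1 + 2 * (x:ℂ) * z + z ^ 2) ^ 2)
      (-8 * (x:ℂ) * (1 - (x:ℂ) ^ 2)) 0 := by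
    have hden : HasDerivAt (fun z : ℂ => 1 + 2 * (x:ℂ) * z + z ^ 2) (2 * (x:ℂ)) 0 := by
      have a := ((hasDerivAt_id (0:ℂ)).const_mul (2 * (x:ℂ))).const_add 1
      have b := hasDerivAt_pow 2 (0:ℂ)
      simpa using! a.add b
    have hn : HasDerivAt (fun z : ℂ => 2 * (1 - (x:ℂ) ^ 2) * (1 - z ^ 2)) 0 0 := by
      have b := ((hasDerivAt_pow 2 (0:ℂ)).const_sub 1).const_mul (2 * (1 - (x:ℂ) ^ 2))
      simpa using! b
    have := hn.div (hden.pow 2) (by simp)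
    convert! this using 1
    simp
    ring
  have hp0 : p 0 = x := by simp [hp]
  have h0 : (0:ℂ) ∈ Metric.ball (0:ℂ) 1 := by simp
  have hg1 : ∀ z ∈ Metric.ball (0:ℂ) 1, HasDerivAt (f ∘ p)
      (deriv f (p z) * (2 * (1 - x ^ 2) * (1 - z ^ 2) / (1 + 2 * x * z + z ^ 2) ^ 2)) z := fun z hz =>
    (hd1 _ (phi_maps x hx z hz).1).comp z (hp1 z hz)
  have hg2 : deriv (deriv (f ∘ p)) 0 =
      deriv (deriv f) x * (2 * (1 - x ^ 2)) ^ 2 + deriv f x * (-8 * x * (1 - x ^ 2)) := by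
    have : deriv (f ∘ p) =ᶠ[nhds 0] fun z => (deriv f ∘ p) z * (2 * (1 - x ^ 2) * (1 - z ^ 2) / (1 + 2 * x * z + z ^ 2) ^ 2) := by
      filter_upwards [Metric.isOpen_ball.mem_nhds h0] with z hz using (hg1 z hz).deriv
    rw [this.deriv_eq]
    have hc := (hd2 _ (phi_maps x hx 0 h0).1).comp (0:ℂ) (hp1 0 h0)
    refine (HasDerivAt.mul hc hp2).deriv.trans ?_
    change deriv (deriv f) (p 0) * _ * _ + deriv f (p 0) * _ = _
    rw [hp0]
    simp
    ring
  have hg10 : deriv (f ∘ p) 0 = deriv f x * (2 * (1 - x ^ 2)) := by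
    rw [(hg1 0 h0).deriv, hp0]; simp
  have hdiff : DifferentiableOn ℂ (f ∘ p) (Metric.ball 0 1) := fun z hz =>
    (hg1 z hz).differentiableAt.differentiableWithinAt
  have hpos : ∀ z ∈ Metric.ball (0:ℂ) 1, 0 ≤ z.im * ((f ∘ p) z).im := by
    intro z hz
    obtain ⟨hm, k, hk, hki⟩ := phi_maps x hx z hz
    change (p z).im = _ at hki
    rcases lt_trichotomy z.im 0 with h | h | h
    · exact mul_nonneg_of_nonpos_of_nonpos h.le (hf.lower _ hm (by
        change (p z).im < 0
        rw [hki]; exact mul_neg_of_pos_of_neg hk h))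
    · simp [h]
    · exact mul_nonneg h.le (hf.upper _ hm (by
        change 0 < (p z).im
        rw [hki]; exact mul_pos hk h))
  have A := coefB (f ∘ p) 1 (by simp) hdiff hpos
  have B := coefB (f ∘ p) (-1) (by simp) hdiff hpos
  have e1 : (deriv (f ∘ p) 0).re = (deriv f x).re * (2 * (1 - x ^ 2)) := by
    rw [hg10, show (2 * (1 - x ^ 2) : ℂ) = ((2 * (1 - x ^ 2) : ℝ) : ℂ) by push_cast; rfl, Complex.re_mul_ofReal]
  have e2 : (deriv (deriv (f ∘ p)) 0).re = (deriv (deriv f) x).re * (2 * (1 - x ^ 2)) ^ 2 +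
      (deriv f x).re * (-8 * x * (1 - x ^ 2)) := by
    rw [hg2, show ((2 * (1 - x ^ 2)) ^ 2 : ℂ) = (((2 * (1 - x ^ 2)) ^ 2 : ℝ) : ℂ) by push_cast; rfl,
      show (-8 * x * (1 - x ^ 2) : ℂ) = ((-8 * x * (1 - x ^ 2) : ℝ) : ℂ) by push_cast; rfl,
      Complex.add_re, Complex.re_mul_ofReal, Complex.re_mul_ofReal]
  rw [e1, e2] at A B
  generalize (deriv f x).re = a at *
  generalize (deriv (deriv f) x).re = b at *
  have a1 : 0 < 1 - x := by linarith [hx.2]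
  have a2 : 0 < 1 + x := by linarith [hx.1]
  constructor
  · rw [div_le_iff₀ a2]
    have : 0 ≤ (2 * (1 - x) ^ 2 * (1 + x)) * (b * (1 + x) + 2 * a) := by
      nlinarith [A]
    have := nonneg_of_mul_nonneg_right this (by positivity)
    linarith
  · rw [le_div_iff₀ a1]
    have : 0 ≤ (2 * (1 + x) ^ 2 * (1 - x)) * (2 * a - b * (1 - x)) := by
      nlinarith [B]
    have := nonneg_of_mul_nonneg_right this (by positivity)
    linarith
end
end

section
/- Let f ∈ A₁(c). Then for every odd positive integer n and every x ∈ (−1,1), the n-th derivative of f at x satisfies f^{(n)}(x) ≥ 0. -/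
open Set Complex

noncomputable section

open MeasureTheory in
lemma aux_param (A a b : ℝ → ℂ) (hA : Continuous A) (ha : Continuous a) (hb : Continuous b)
    (δ : ℝ) (hδ : 0 < δ) (s : Set ℝ) (hs : IsOpen s)
    (h : ∀ x ∈ s, ∀ t, δ ≤ ‖a t - x * b t‖) (n : ℕ) (x : ℝ) (hx : x ∈ s) :
    HasDerivAt (fun x : ℝ => ∫ t in (0:ℝ)..(2 * Real.pi), A t * b t ^ n / (a t - x * b t) ^ (n + 1))
      ((n + 1 : ℂ) * ∫ t in (0:ℝ)..(2 * Real.pi), A t * b t ^ (n + 1) / (a t - x * b t) ^ (n + 2)) x := by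
  have hne : ∀ x ∈ s, ∀ t, a t - x * b t ≠ 0 := fun x hx t h0 => by
    have := h x hx t
    rw [h0, norm_zero] at this
    linarith
  have hc : ∀ x ∈ s, ∀ m k : ℕ, Continuous (fun t => A t * b t ^ m / (a t - x * b t) ^ k) := by
    intro x hx m k
    exact (hA.mul (hb.pow m)).div ((ha.sub (continuous_const.mul hb)).pow k)
      (fun t => pow_ne_zero _ (hne x hx t))
  rw [← intervalIntegral.integral_const_mul]
  refine (intervalIntegral.hasDerivAt_integral_of_dominated_loc_of_deriv_le
    (F := fun (x : ℝ) t => A t * b t ^ n / (a t - x * b t) ^ (n + 1))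
    (F' := fun (x : ℝ) t => (n + 1 : ℂ) * (A t * b t ^ (n + 1) / (a t - x * b t) ^ (n + 2)))
    (bound := fun t => (n + 1 : ℝ) * (‖A t‖ * ‖b t‖ ^ (n + 1) / δ ^ (n + 2)))
    (hs.mem_nhds hx) ?_ ?_ ?_ ?_ ?_ ?_).2
  · filter_upwards [hs.mem_nhds hx] with y hy
    exact (hc y hy n (n + 1)).aestronglyMeasurable
  · exact (hc x hx n (n + 1)).intervalIntegrable _ _
  · exact (continuous_const.mul (hc x hx (n + 1) (n + 2))).aestronglyMeasurable
  · refine Filter.Eventually.of_forall fun t _ y hy => ?_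
    have h1 : ‖(n + 1 : ℂ)‖ = (n + 1 : ℝ) := by
      have := Complex.norm_natCast (n + 1)
      push_cast at this
      exact this
    rw [norm_mul, norm_div, norm_mul, norm_pow, norm_pow, h1]
    have := h y hy t
    gcongr
  · apply Continuous.intervalIntegrable
    fun_prop
  · refine Filter.Eventually.of_forall fun t _ y hy => ?_
    have h1 : HasDerivAt (fun y : ℝ => a t - y * b t) (-(b t)) y := by
      have := ((Complex.ofRealCLM.hasDerivAt (x := y)).mul_const (b t)).const_sub (a t)
      simpa using this
    have h2 := (h1.pow (n + 1)).inv (pow_ne_zero _ (hne y hy t))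
    have h3 := h2.const_mul (A t * b t ^ n)
    have hz := hne y hy t
    refine (h3.congr_deriv ?_)
    simp only [Nat.add_sub_cancel, Nat.cast_add, Nat.cast_one, Pi.pow_apply]
    field_simp
    ring

/-- the uniformizing map of the disc -/
def zmap (w : ℂ) : ℂ := 2 * w / (1 + w ^ 2)

lemma one_add_sq_ne {w : ℂ} (hw : ‖w‖ < 1) : 1 + w ^ 2 ≠ 0 := by
  intro h
  have : w ^ 2 = -1 := by linear_combination h
  have h2 : ‖w‖ ^ 2 = 1 := by rw [← norm_pow, this]; simp
  nlinarith [norm_nonneg w]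

lemma zmap_im (w : ℂ) : (zmap w).im = w.im * (2 * (1 - ‖w‖ ^ 2) / normSq (1 + w ^ 2)) := by
  have : ‖w‖ ^ 2 = w.re * w.re + w.im * w.im := by
    rw [← Complex.normSq_eq_norm_sq, Complex.normSq_apply]
  rw [zmap, Complex.div_im, this]
  simp [pow_two]
  ring

lemma zmap_coef {w : ℂ} (hw : ‖w‖ < 1) : 0 < 2 * (1 - ‖w‖ ^ 2) / normSq (1 + w ^ 2) := by
  apply div_pos
  · nlinarith [norm_nonneg w]
  · exact Complex.normSq_pos.2 (one_add_sq_ne hw)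

lemma zmap_mem {w : ℂ} (hw : ‖w‖ < 1) : zmap w ∈ C1 := by
  by_cases h : w.im = 0
  · right
    obtain ⟨r, rfl⟩ : ∃ r : ℝ, w = r := ⟨w.re, by apply Complex.ext <;> simp [h]⟩
    have hr : |r| < 1 := by simpa using hw
    rw [abs_lt] at hr
    have : zmap (r : ℂ) = ((2 * r / (1 + r ^ 2) : ℝ) : ℂ) := by simp [zmap]
    rw [this, Complex.ofReal_re]
    have hp : 0 < 1 + r ^ 2 := by positivity
    constructor
    · rw [lt_div_iff₀ hp]; nlinarith
    · rw [div_lt_iff₀ hp]; nlinarith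
  · left
    rw [zmap_im]
    exact mul_ne_zero h (zmap_coef hw).ne'

lemma zmap_diff : DifferentiableOn ℂ zmap (Metric.ball 0 1) := by
  intro w hw
  have hw : ‖w‖ < 1 := by simpa using hw
  have := one_add_sq_ne hw
  unfold zmap
  have h1 : DifferentiableAt ℂ (fun w : ℂ => 1 + w ^ 2) w := by fun_prop
  have h2 : DifferentiableAt ℂ (fun w : ℂ => 2 * w) w := by fun_prop
  exact (h2.fun_div h1 this).differentiableWithinAt

lemma den_bound {x ρ δ : ℝ} (hx : |x| * (1 + ρ ^ 2) < 2 * ρ - δ) {w : ℂ} (hw : ‖w‖ = ρ) :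
    δ ≤ ‖2 * w - x * (1 + w ^ 2)‖ := by
  have h1 : ‖(x : ℂ) * (1 + w ^ 2)‖ ≤ |x| * (1 + ρ ^ 2) := by
    rw [norm_mul, Complex.norm_real, Real.norm_eq_abs]
    gcongr
    calc ‖1 + w ^ 2‖ ≤ ‖(1 : ℂ)‖ + ‖w ^ 2‖ := norm_add_le _ _
      _ = _ := by simp [hw]
  have h2 := norm_sub_norm_le (2 * w) (x * (1 + w ^ 2))
  have h3 : ‖2 * w‖ = 2 * ρ := by simp [hw]
  linarith

lemma den_ne {x ρ : ℝ} (hρ : 0 < ρ) (hx : |x| * (1 + ρ ^ 2) < 2 * ρ) {w : ℂ}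
    (hw : ρ ≤ ‖w‖) (hw1 : ‖w‖ ≤ 1) : 2 * w - x * (1 + w ^ 2) ≠ 0 := by
  have key : |x| * (1 + ‖w‖ ^ 2) < 2 * ‖w‖ := by
    have h1 : (1 + ‖w‖ ^ 2) * ρ ≤ (1 + ρ ^ 2) * ‖w‖ := by
      have : 0 ≤ (‖w‖ - ρ) * (1 - ‖w‖ * ρ) := mul_nonneg (by linarith) (by nlinarith)
      nlinarith
    have h2 := mul_le_mul_of_nonneg_left h1 (abs_nonneg x)
    have h3 := mul_lt_mul_of_pos_right hx (hρ.trans_le hw)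
    have : |x| * (1 + ‖w‖ ^ 2) * ρ < 2 * ‖w‖ * ρ := by nlinarith
    exact lt_of_mul_lt_mul_right this hρ.le
  have := den_bound (x := x) (δ := (2 * ‖w‖ - |x| * (1 + ‖w‖ ^ 2)) / 2) (by linarith) (rfl : ‖w‖ = ‖w‖)
  intro h0
  rw [h0, norm_zero] at this
  linarith

lemma cauchy_rep {f : ℂ → ℂ} (hf : DifferentiableOn ℂ f C1) {x ρ : ℝ} (hρ : 0 < ρ) (hρ1 : ρ < 1)
    (hx : |x| * (1 + ρ ^ 2) < 2 * ρ) :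
    (∮ w in C(0, ρ), f (zmap w) * (2 * (1 - w ^ 2) / (1 + w ^ 2)) / (2 * w - x * (1 + w ^ 2)))
      = 2 * Real.pi * I * f x := by
  have hx' : |x * (1 + ρ ^ 2)| < 2 * ρ := by
    rw [abs_mul, abs_of_pos (by positivity : 0 < 1 + ρ ^ 2)]; exact hx
  rw [abs_lt] at hx'
  obtain ⟨p, hp, hpx⟩ : ∃ p ∈ Icc (-ρ) ρ, x * (1 + p ^ 2) - 2 * p = 0 := by
    have hcont : ContinuousOn (fun p : ℝ => x * (1 + p ^ 2) - 2 * p) (Icc (-ρ) ρ) := by fun_prop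
    have := intermediate_value_Icc' (by linarith) hcont
    obtain ⟨p, hp, h⟩ := this (show (0:ℝ) ∈ _ from ⟨by linarith, by ring_nf; ring_nf at hx'; linarith⟩)
    exact ⟨p, hp, h⟩
  have hpl : |p| < ρ := by
    rw [abs_lt]
    constructor
    · refine lt_of_le_of_ne hp.1 ?_
      rintro rfl
      nlinarith
    · refine lt_of_le_of_ne hp.2 ?_
      rintro rfl
      nlinarith
  have hpc : (x : ℂ) * (1 + p ^ 2) - 2 * p = 0 := by exact_mod_cast hpx
  have hp1 : (1 + (p : ℂ) ^ 2) ≠ 0 := by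
    have : (1 + p ^ 2 : ℝ) ≠ 0 := by positivity
    exact_mod_cast this
  have hxp : (x : ℂ) = 2 * p / (1 + p ^ 2) := by
    field_simp
    linear_combination hpc
  have hpw : ∀ w : ℂ, ‖w‖ < 1 → 1 - p * w ≠ 0 := by
    intro w hw h0
    have h1 : (p : ℂ) * w = 1 := by linear_combination -h0
    have h2 : ‖(p : ℂ) * w‖ = 1 := by rw [h1]; simp
    rw [norm_mul, Complex.norm_real, Real.norm_eq_abs] at h2
    nlinarith [abs_nonneg p, norm_nonneg w]
  set g : ℂ → ℂ := fun w => f (zmap w) * ((1 - w ^ 2) * (1 + p ^ 2) / ((1 + w ^ 2) * (1 - p * w))) with hg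
  have hgd : DifferentiableOn ℂ g (Metric.ball 0 1) := by
    apply DifferentiableOn.mul
    · exact hf.comp zmap_diff (fun w hw => zmap_mem (by simpa using hw))
    · intro w hw
      have hw : ‖w‖ < 1 := by simpa using hw
      have h1 : DifferentiableAt ℂ (fun w : ℂ => (1 + w ^ 2) * (1 - p * w)) w := by fun_prop
      have h2 : DifferentiableAt ℂ (fun w : ℂ => (1 - w ^ 2) * (1 + (p : ℂ) ^ 2)) w := by fun_prop
      exact (h2.fun_div h1 (mul_ne_zero (one_add_sq_ne hw) (hpw w hw))).differentiableWithinAt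
  have hgc : DifferentiableOn ℂ g (Metric.closedBall 0 ρ) :=
    hgd.mono (Metric.closedBall_subset_ball hρ1)
  have hC := hgc.circleIntegral_sub_inv_smul (w := (p : ℂ)) (by simpa using hpl)
  have hgp : g p = f x := by
    have hq : 1 - (p : ℂ) ^ 2 ≠ 0 := by
      have := hpw p (by simpa using hpl.trans hρ1)
      rwa [← pow_two] at this
    have : zmap p = x := by rw [hxp, zmap]
    simp only [hg, this]
    rw [← pow_two]
    field_simp
  rw [hgp, smul_eq_mul] at hC
  rw [← hC]
  apply circleIntegral.integral_congr hρ.le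
  intro w hw
  have hw : ‖w‖ = ρ := by simpa using hw
  have h1 := one_add_sq_ne (hw.trans_lt hρ1)
  have h2 := hpw w (hw.trans_lt hρ1)
  have h3 : w - p ≠ 0 := by
    intro h0
    have : w = p := by linear_combination h0
    rw [this] at hw
    simp at hw
    linarith
  have h4 : 2 * w - x * (1 + w ^ 2) = 2 * (w - p) * (1 - p * w) / (1 + p ^ 2) := by
    rw [hxp]
    field_simp
    ring
  simp only [smul_eq_mul, hg]
  rw [h4]
  field_simp

lemma circle_kernel (m : ℕ) (x θ : ℝ) (hx : |x| < 1) :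
    circleMap 0 1 θ * I * (2 * (1 - circleMap 0 1 θ ^ 2) * (1 + circleMap 0 1 θ ^ 2) ^ m /
      (2 * circleMap 0 1 θ - x * (1 + circleMap 0 1 θ ^ 2)) ^ (m + 2))
      = ((Real.sin θ * Real.cos θ ^ m / (1 - x * Real.cos θ) ^ (m + 2) : ℝ) : ℂ) := by
  set w := circleMap 0 1 θ with hw
  have hwe : w = Real.cos θ + Real.sin θ * I := by
    rw [hw, circleMap, Complex.exp_mul_I]; simp
  have hsc : (Real.sin θ : ℂ) ^ 2 + (Real.cos θ : ℂ) ^ 2 = 1 := by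
    exact_mod_cast Real.sin_sq_add_cos_sq θ
  have hw0 : w ≠ 0 := by rw [hw]; simp [circleMap]
  have e1 : 1 - w ^ 2 = -2 * I * Real.sin θ * w := by
    rw [hwe]; linear_combination (-1 : ℂ) * hsc + (Real.sin θ : ℂ) ^ 2 * I_sq
  have e2 : 1 + w ^ 2 = 2 * Real.cos θ * w := by
    rw [hwe]; linear_combination (-1 : ℂ) * hsc + (Real.sin θ : ℂ) ^ 2 * I_sq
  have hk : 1 - x * Real.cos θ ≠ 0 := by
    have h1 : |x * Real.cos θ| < 1 := by
      rw [abs_mul]; nlinarith [Real.abs_cos_le_one θ, abs_nonneg x, abs_nonneg (Real.cos θ)]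
    rw [abs_lt] at h1
    linarith
  have hk' : (1 - x * Real.cos θ : ℂ) ≠ 0 := by exact_mod_cast hk
  have e3 : 2 * w - x * (1 + w ^ 2) = 2 * w * (1 - x * Real.cos θ) := by rw [e2]; ring
  rw [e3, e1, e2]
  push_cast
  push_cast at hk'
  rw [mul_pow, mul_pow, mul_pow, mul_pow]
  field_simp
  linear_combination (-4 * (Complex.sin θ) * (Complex.cos θ) ^ m * (2 : ℂ) ^ m * w ^ (m+2)) * I_sq

theorem stmt9 (c₁ c₂ c₃ c₄ : ℝ)
    (h1 : -1 < c₁) (h12 : c₁ < c₂) (h2 : c₂ < 1)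
    (h3 : -1 < c₃) (h34 : c₃ < c₄) (h4 : c₄ < 1)
    (f : ℂ → ℂ) (hf : MemA1 c₁ c₂ c₃ c₄ f) :
    ∀ n : ℕ, Odd n → 0 < n →
      ∀ x ∈ Set.Ioo (-1 : ℝ) 1,
        0 ≤ iteratedDeriv n (fun y : ℝ => (f y).re) x := by
  intro n hn _ x hx
  have hx1 : |x| < 1 := abs_lt.2 hx
  obtain ⟨m, rfl⟩ : ∃ m, n = m + 1 := ⟨n - 1, by have := hn.pos; omega⟩
  have hm : Even m := by
    rcases Nat.even_or_odd m with h | h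
    · exact h
    · exact absurd hn (by simpa using h.add_one)
  obtain ⟨ρ, hρ, hρ1, hxρ⟩ : ∃ ρ : ℝ, 0 < ρ ∧ ρ < 1 ∧ |x| * (1 + ρ ^ 2) < 2 * ρ := by
    have h0 := abs_nonneg x
    refine ⟨(1 + |x|) / 2, by linarith, by linarith, ?_⟩
    set ρ := (1 + |x|) / 2 with hr
    have e : |x| = 2 * ρ - 1 := by rw [hr]; ring
    have hr1 : ρ < 1 := by rw [hr]; linarith
    have hr0 : 0 < ρ := by rw [hr]; linarith
    rw [e]
    nlinarith [mul_pos hr0 hr0, mul_pos (mul_pos hr0 hr0) (sub_pos.2 hr1)]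
  set δ := (2 * ρ - |x| * (1 + ρ ^ 2)) / 2 with hδd
  have hδ : 0 < δ := by rw [hδd]; linarith
  set s : Set ℝ := {y | |y| * (1 + ρ ^ 2) < 2 * ρ - δ} with hs
  have hso : IsOpen s := isOpen_lt (by fun_prop) (by fun_prop)
  have hxs : x ∈ s := by
    change |x| * (1 + ρ ^ 2) < 2 * ρ - δ
    rw [hδd]; linarith
  set G : ℂ → ℂ := fun w => f (zmap w) with hG
  have hGd : DifferentiableOn ℂ G (Metric.ball 0 1) :=
    hf.holo.comp zmap_diff (fun w hw => zmap_mem (by simpa using hw))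
  set c : ℝ → ℂ := circleMap 0 ρ with hc
  have hcc : Continuous c := continuous_circleMap 0 ρ
  have hcn : ∀ t, ‖c t‖ = ρ := fun t => by simp [hc, abs_of_pos hρ]
  have hGc : Continuous (fun t => G (c t)) :=
    hGd.continuousOn.comp_continuous hcc (fun t => by simpa [hcn t] using hρ1)
  set A : ℝ → ℂ := fun t => c t * I * (G (c t) * (2 * (1 - c t ^ 2) / (1 + c t ^ 2))) with hA
  have hone : ∀ t, 1 + c t ^ 2 ≠ 0 := fun t => one_add_sq_ne (by rw [hcn]; exact hρ1)
  have hAc : Continuous A := by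
    refine (hcc.mul continuous_const).mul (hGc.mul (Continuous.div (by fun_prop) (by fun_prop) hone))
  have hder := aux_param A (fun t => 2 * c t) (fun t => 1 + c t ^ 2) hAc (by fun_prop) (by fun_prop)
    δ hδ s hso (fun y hy t => den_bound hy (hcn t))
  set J : ℕ → ℝ → ℂ := fun k y => ∫ t in (0:ℝ)..(2 * Real.pi),
    A t * (1 + c t ^ 2) ^ k / (2 * c t - y * (1 + c t ^ 2)) ^ (k + 1) with hJ
  have hJ0 : ∀ y ∈ s, J 0 y = 2 * Real.pi * I * f y := by
    intro y hy
    have hy' : |y| * (1 + ρ ^ 2) < 2 * ρ := by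
      have : |y| * (1 + ρ ^ 2) < 2 * ρ - δ := hy
      linarith
    rw [← cauchy_rep hf.holo hρ hρ1 hy']
    simp only [hJ, circleIntegral, hA, hc, deriv_circleMap, smul_eq_mul, hG]
    congr 1
    ext t
    simp
    ring
  have hpi : (2 * Real.pi * I : ℂ) ≠ 0 := by simp [Real.pi_ne_zero]
  -- iterated derivatives
  have hiter : ∀ k : ℕ, ∀ y ∈ s, iteratedDeriv k (fun y : ℝ => (f y).re) y
      = (k.factorial * (J k y / (2 * Real.pi * I))).re := by
    intro k
    induction k with
    | zero =>
      intro y hy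
      rw [iteratedDeriv_zero, hJ0 y hy, mul_div_cancel_left₀ _ hpi]
      simp
    | succ k ih =>
      intro y hy
      rw [iteratedDeriv_succ]
      have hev : iteratedDeriv k (fun y : ℝ => (f y).re) =ᶠ[nhds y]
          fun y => (k.factorial * (J k y / (2 * Real.pi * I))).re := by
        filter_upwards [hso.mem_nhds hy] with u hu using ih u hu
      rw [hev.deriv_eq]
      have hd := ((hder k y hy).div_const (2 * Real.pi * I)).const_mul (k.factorial : ℂ)
      have hd2 := (Complex.reCLM.hasFDerivAt.comp_hasDerivAt y hd).deriv
      refine hd2.trans ?_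
      simp only [Complex.reCLM_apply, Nat.factorial_succ, hJ]
      push_cast
      congr 1
      ring
  rw [hiter _ x hxs]
  -- deformation
  set K : ℂ → ℂ := fun w => 2 * (1 - w ^ 2) * (1 + w ^ 2) ^ m / (2 * w - x * (1 + w ^ 2)) ^ (m + 2) with hK
  set cl : ℝ → ℝ := fun r => max 0 (min r 1) with hcl
  have hclc : Continuous cl := by fun_prop
  have hcl0 : ∀ r, 0 ≤ cl r := fun r => le_max_left _ _
  have hcl1 : ∀ r, cl r ≤ 1 := fun r => max_le zero_le_one (min_le_right _ _)
  set Φ : ℝ → ℂ := fun r => ∫ t in (0:ℝ)..(2 * Real.pi), c t * I * (G (cl r * c t) * K (c t)) with hΦ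
  have hKd : ∀ w : ℂ, ρ ≤ ‖w‖ → ‖w‖ ≤ 1 → DifferentiableAt ℂ K w := by
    intro w hw hw1
    exact DifferentiableAt.div (by fun_prop) (by fun_prop) (pow_ne_zero _ (den_ne hρ hxρ hw hw1))
  have hKc : Continuous (fun t => K (c t)) := by
    rw [continuous_iff_continuousAt]
    intro t
    exact ContinuousAt.comp (hKd (c t) (hcn t).ge ((hcn t).trans_le hρ1.le)).continuousAt
      hcc.continuousAt
  have hΦc : Continuous Φ := by
    apply intervalIntegral.continuous_parametric_intervalIntegral_of_continuous'
    have hg : Continuous (fun q : ℝ × ℝ => G (cl q.1 * c q.2)) := by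
      apply hGd.continuousOn.comp_continuous (by fun_prop)
      intro q
      have : ‖(cl q.1 : ℂ) * c q.2‖ < 1 := by
        rw [norm_mul, hcn, Complex.norm_real, Real.norm_eq_abs, abs_of_nonneg (hcl0 _)]
        nlinarith [hcl0 q.1, hcl1 q.1]
      simpa using this
    exact ((hcc.comp continuous_snd).mul continuous_const).mul (hg.mul (hKc.comp continuous_snd))
  have hJΦ : J (m + 1) x = Φ 1 := by
    simp only [hJ, hΦ, hA, hK, hcl]
    congr 1
    ext t
    have := hone t
    simp only [min_self, max_eq_right zero_le_one, Complex.ofReal_one, one_mul]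
    rw [pow_succ (1 + c t ^ 2)]
    field_simp
  have hpos : ∀ r ∈ Ioo (0:ℝ) 1, 0 ≤ (Φ r).im := by
    intro r hr
    have hclr : cl r = r := by simp [hcl, hr.1.le, hr.2.le]
    have hGr : ∀ w : ℂ, ‖w‖ ≤ 1 → ‖(r : ℂ) * w‖ < 1 := by
      intro w hw
      rw [norm_mul, Complex.norm_real, Real.norm_eq_abs, abs_of_pos hr.1]
      nlinarith [hr.1, hr.2, norm_nonneg w]
    have hFd : ∀ w : ℂ, ρ ≤ ‖w‖ → ‖w‖ ≤ 1 → DifferentiableAt ℂ (fun w => G (r * w) * K w) w := by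
      intro w hw hw1
      refine DifferentiableAt.mul ?_ (hKd w hw hw1)
      have h1 : DifferentiableAt ℂ G (r * w) :=
        hGd.differentiableAt (Metric.isOpen_ball.mem_nhds (by simpa using hGr w hw1))
      exact DifferentiableAt.comp (g := G) (f := fun w : ℂ => (r : ℂ) * w) w h1 (by fun_prop)
    have hann := circleIntegral_eq_of_differentiable_on_annulus_off_countable (c := 0) hρ hρ1.le
      (f := fun w => G (r * w) * K w) Set.countable_empty
      (fun w hw => (hFd w (by simpa using hw.2) (by simpa using hw.1)).continuousAt.continuousWithinAt)
      (fun w hw => hFd w (by have := hw.1.2; simp at this; exact this.le)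
        (by have := hw.1.1; simp at this; exact this.le))
    have e1 : Φ r = ∮ w in C(0, ρ), G (r * w) * K w := by
      simp only [hΦ, hclr, circleIntegral, deriv_circleMap, smul_eq_mul, hc]
    rw [e1, ← hann]
    have e2 : (∮ w in C(0, 1), G (r * w) * K w) = ∫ t in (0:ℝ)..(2 * Real.pi),
        G (r * circleMap 0 1 t) *
          ((Real.sin t * Real.cos t ^ m / (1 - x * Real.cos t) ^ (m + 2) : ℝ) : ℂ) := by
      simp only [circleIntegral, deriv_circleMap, smul_eq_mul]
      congr 1
      ext t
      rw [← circle_kernel m x t hx1]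
      simp only [hK]
      ring
    have hint : IntervalIntegrable (fun t => G (r * circleMap 0 1 t) *
          ((Real.sin t * Real.cos t ^ m / (1 - x * Real.cos t) ^ (m + 2) : ℝ) : ℂ))
          MeasureTheory.volume 0 (2 * Real.pi) := by
      apply Continuous.intervalIntegrable
      refine Continuous.mul ?_ ?_
      · exact hGd.continuousOn.comp_continuous (by fun_prop)
          (fun t => by simpa using hGr (circleMap 0 1 t) (by simp))
      · refine Complex.continuous_ofReal.comp ?_
        refine Continuous.div (by fun_prop) (by fun_prop) fun t => pow_ne_zero _ ?_
        have h1 : |x * Real.cos t| < 1 := by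
          rw [abs_mul]; nlinarith [Real.abs_cos_le_one t, abs_nonneg x, abs_nonneg (Real.cos t)]
        rw [abs_lt] at h1
        linarith
    have e3 := Complex.imCLM.intervalIntegral_comp_comm hint
    simp only [Complex.imCLM_apply] at e3
    rw [e2, ← e3]
    apply intervalIntegral.integral_nonneg (by positivity)
    intro t _
    rw [Complex.im_mul_ofReal]
    set w : ℂ := r * circleMap 0 1 t with hw
    have hwn : ‖w‖ < 1 := hGr _ (by simp)
    have hwim : w.im = r * Real.sin t := by
      rw [hw, Complex.im_ofReal_mul, circleMap]; simp [Complex.exp_ofReal_mul_I_im]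
    have hsign : 0 ≤ (G w).im * Real.sin t := by
      have hz := zmap_im w
      have hzc := zmap_coef hwn
      rcases lt_trichotomy (Real.sin t) 0 with h | h | h
      · refine mul_nonneg_of_nonpos_of_nonpos (hf.lower _ (zmap_mem hwn) ?_) h.le
        rw [hz, hwim]
        exact mul_neg_of_neg_of_pos (mul_neg_of_pos_of_neg hr.1 h) hzc
      · simp [h]
      · refine mul_nonneg (hf.upper _ (zmap_mem hwn) ?_) h.le
        rw [hz, hwim]
        exact mul_pos (mul_pos hr.1 h) hzc
    have hrest : 0 ≤ Real.cos t ^ m / (1 - x * Real.cos t) ^ (m + 2) :=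
      div_nonneg (hm.pow_nonneg _) ((hm.add even_two).pow_nonneg _)
    calc 0 ≤ ((G w).im * Real.sin t) * (Real.cos t ^ m / (1 - x * Real.cos t) ^ (m + 2)) :=
          mul_nonneg hsign hrest
      _ = _ := by ring
  have hlim : 0 ≤ (Φ 1).im := by
    have ht : Filter.Tendsto (fun r => (Φ r).im) (nhdsWithin 1 (Iio 1)) (nhds (Φ 1).im) :=
      ((Complex.continuous_im.comp hΦc).tendsto 1).mono_left nhdsWithin_le_nhds
    refine ge_of_tendsto ht ?_
    filter_upwards [Ioo_mem_nhdsLT (show (0:ℝ) < 1 by norm_num)] with r hr using hpos r hr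
  rw [hJΦ]
  have e : ((m + 1).factorial * (Φ 1 / (2 * Real.pi * I)) : ℂ)
      = (((m + 1).factorial / (2 * Real.pi) : ℝ) : ℂ) * (-I * Φ 1) := by
    have : (Real.pi : ℂ) ≠ 0 := by simp [Real.pi_ne_zero]
    push_cast
    field_simp
    linear_combination ((m + 1).factorial * Φ 1) * I_sq
  rw [e, Complex.re_ofReal_mul]
  have : (-I * Φ 1).re = (Φ 1).im := by simp
  rw [this]
  positivity
end
end

section
/- Let f ∈ A₁(c). Then f′(x) > 0 for every x ∈ (−1,1), and f satisfies the differential inequality f‴(x) ≥ 3·f″(x)²/(2·f′(x)) for every x ∈ (−1,1); equivalently, the Schwarzian derivative f‴/f′ − (3/2)(f″/f′)² of f is nonnegative on (−1,1). -/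
open Set Complex

noncomputable section

open Filter Topology


/-- Peeling off one Taylor coefficient. -/
lemma aux_peel {φ : ℝ → ℝ} {x : ℝ} (h : AnalyticAt ℝ φ x) :
    ∃ g : ℝ → ℝ, AnalyticAt ℝ g x ∧ ∀ᶠ y in 𝓝 x, φ y = φ x + (y - x) * g y := by
  have h0 : AnalyticAt ℝ (fun y => φ y - φ x) x := h.sub analyticAt_const
  have h1 : ((1 : ℕ) : ℕ∞) ≤ analyticOrderAt (fun y => φ y - φ x) x := by
    have : analyticOrderAt (fun y => φ y - φ x) x ≠ 0 := by
      rw [h0.analyticOrderAt_ne_zero]; simp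
    simpa using Order.one_le_iff_ne_zero.mpr this
  obtain ⟨g, hg, hE⟩ := (natCast_le_analyticOrderAt h0).1 h1
  refine ⟨g, hg, hE.mono fun y hy => ?_⟩
  simp at hy; linarith

/-- Real-variable part: the two-point Loewner inequality gives the Schwarzian inequality. -/
lemma aux_taylor {φ : ℝ → ℝ} {x : ℝ} (h : AnalyticAt ℝ φ x)
    (hL : ∀ᶠ y in 𝓝 x, (φ y - φ x) ^ 2 ≤ (y - x) ^ 2 * (deriv φ x * deriv φ y)) :
    3 * (deriv (deriv φ) x) ^ 2 ≤ 2 * deriv φ x * deriv (deriv (deriv φ)) x := by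
  obtain ⟨g1, hg1, e1⟩ := aux_peel h
  obtain ⟨g2, hg2, e2⟩ := aux_peel hg1
  obtain ⟨k, hk, e3⟩ := aux_peel hg2
  set a0 := φ x
  set a1 := g1 x
  set a2 := g2 x
  have E : φ =ᶠ[𝓝 x] fun y => a0 + a1 * (y - x) + a2 * (y - x) ^ 2 + (y - x) ^ 3 * k y := by
    filter_upwards [e1, e2, e3] with y h1 h2 h3
    rw [h1, h2, h3]; ring
  have hk1 := hk.deriv
  have hk2 := hk1.deriv
  have dt : ∀ y : ℝ, HasDerivAt (fun y => y - x) 1 y := fun y => (hasDerivAt_id y).sub_const x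
  have E1 : deriv φ =ᶠ[𝓝 x] fun y => a1 + 2 * a2 * (y - x) + 3 * (y - x) ^ 2 * k y
      + (y - x) ^ 3 * deriv k y := by
    refine E.deriv.trans ?_
    filter_upwards [hk.eventually_analyticAt] with y hy
    have := ((((dt y).const_mul a1).const_add a0).add (((dt y).pow 2).const_mul a2)).add
      (((dt y).pow 3).mul hy.differentiableAt.hasDerivAt)
    refine HasDerivAt.deriv (this.congr_deriv ?_)
    simp; ring
  have E2 : deriv (deriv φ) =ᶠ[𝓝 x] fun y => 2 * a2 + 6 * (y - x) * k y
      + 6 * (y - x) ^ 2 * deriv k y + (y - x) ^ 3 * deriv (deriv k) y := by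
    refine E1.deriv.trans ?_
    filter_upwards [hk.eventually_analyticAt, hk1.eventually_analyticAt] with y hy hy1
    have := ((((dt y).const_mul (2 * a2)).const_add a1).add
      ((((dt y).pow 2).const_mul 3).mul hy.differentiableAt.hasDerivAt)).add
      (((dt y).pow 3).mul hy1.differentiableAt.hasDerivAt)
    refine HasDerivAt.deriv (this.congr_deriv ?_)
    simp; ring
  have E3 : deriv (deriv (deriv φ)) x = 6 * k x := by
    rw [E2.deriv_eq]
    have := (((((dt x).const_mul 6).mul hk.differentiableAt.hasDerivAt).const_add (2 * a2)).add
      ((((dt x).pow 2).const_mul 6).mul hk1.differentiableAt.hasDerivAt)).add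
      (((dt x).pow 3).mul hk2.differentiableAt.hasDerivAt)
    refine HasDerivAt.deriv (this.congr_deriv ?_)
    simp
  have v1 : deriv φ x = a1 := by simpa using E1.eq_of_nhds
  have v2 : deriv (deriv φ) x = 2 * a2 := by simpa using E2.eq_of_nhds
  rw [E3, v1, v2]
  -- the limit
  let G : ℝ → ℝ := fun y => a1 * k y + a1 * (y - x) * deriv k y - a2 ^ 2
    - 2 * a2 * (y - x) * k y - (y - x) ^ 2 * k y ^ 2
  have hG : ContinuousAt G x := by
    have c1 := hk.continuousAt
    have c2 := hk1.continuousAt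
    fun_prop
  have hpos : ∀ᶠ y in 𝓝[≠] x, 0 ≤ G y := by
    filter_upwards [hL.filter_mono nhdsWithin_le_nhds, E.filter_mono nhdsWithin_le_nhds,
      E1.filter_mono nhdsWithin_le_nhds, self_mem_nhdsWithin] with y h1 h2 h3 h4
    rw [v1, h3, h2] at h1
    have ht : 0 < (y - x) ^ 4 := by
      have : y - x ≠ 0 := sub_ne_zero.mpr h4
      positivity
    have : 0 ≤ (y - x) ^ 4 * G y := by
      simp only [G]; nlinarith [h1]
    exact nonneg_of_mul_nonneg_right this ht
  have : 0 ≤ G x := ge_of_tendsto (hG.tendsto.mono_left nhdsWithin_le_nhds) hpos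
  simp [G] at this
  nlinarith

/-- Schwarz–Pick for the upper half-plane, strict version. -/
lemma aux_SP {F : ℂ → ℂ} (hF : DifferentiableOn ℂ F {z | 0 < z.im})
    (hm : ∀ z : ℂ, 0 < z.im → 0 < (F z).im) {z w : ℂ} (hz : 0 < z.im) (hw : 0 < w.im) :
    normSq (F z - F w) * (z.im * w.im) ≤ normSq (z - w) * ((F z).im * (F w).im) := by
  have key : ∀ a b : ℂ, normSq (a - (starRingEnd ℂ) b) = normSq (a - b) + 4 * a.im * b.im := by
    intro a b; simp [normSq_apply]; ring
  have ne : ∀ a b : ℂ, 0 < a.im → 0 < b.im → a - (starRingEnd ℂ) b ≠ 0 := by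
    intro a b ha hb h
    have := congrArg Complex.im h
    simp at this; linarith
  -- inverse Cayley transform
  let C : ℂ → ℂ := fun ζ => (w - (starRingEnd ℂ) w * ζ) / (1 - ζ)
  have h1 : ∀ ζ ∈ Metric.ball (0 : ℂ) 1, (1 - ζ) ≠ 0 := by
    intro ζ hζ h
    have : ζ = 1 := by linear_combination -h
    simp [this] at hζ
  have hC : ∀ ζ ∈ Metric.ball (0 : ℂ) 1, 0 < (C ζ).im := by
    intro ζ hζ
    have hn : normSq ζ < 1 := by
      rw [mem_ball_zero_iff] at hζ
      rw [normSq_eq_norm_sq]; nlinarith [norm_nonneg ζ]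
    have hp : 0 < normSq (1 - ζ) := normSq_pos.mpr (h1 ζ hζ)
    have : (C ζ).im = w.im * (1 - normSq ζ) / normSq (1 - ζ) := by
      simp only [C, div_im]
      field_simp
      simp [normSq_apply]; ring
    rw [this]
    have := sub_pos.mpr hn
    positivity
  let g : ℂ → ℂ := fun ζ => (F (C ζ) - F w) / (F (C ζ) - (starRingEnd ℂ) (F w))
  have hC0 : C 0 = w := by simp [C]
  have hCd : DifferentiableOn ℂ C (Metric.ball 0 1) := by
    apply DifferentiableOn.div _ _ h1 <;> fun_prop
  have hFC : DifferentiableOn ℂ (fun ζ => F (C ζ)) (Metric.ball 0 1) := hF.comp hCd hC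
  have hg : DifferentiableOn ℂ g (Metric.ball 0 1) :=
    (hFC.sub_const _).div (hFC.sub_const _) fun ζ hζ => ne _ _ (hm _ (hC ζ hζ)) (hm _ hw)
  have hgm : MapsTo g (Metric.ball 0 1) (Metric.ball 0 1) := by
    intro ζ hζ
    rw [mem_ball_zero_iff]
    have a := hm _ (hC ζ hζ)
    have b := hm _ hw
    simp only [g, norm_div]
    rw [div_lt_one (norm_pos_iff.mpr (ne _ _ a b))]
    apply lt_of_pow_lt_pow_left₀ 2 (norm_nonneg _)
    rw [← normSq_eq_norm_sq, ← normSq_eq_norm_sq, key]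
    nlinarith [mul_pos a b]
  have hg0 : g 0 = 0 := by simp [g, hC0]
  set ζ := (z - w) / (z - (starRingEnd ℂ) w) with hζd
  have hzw := ne z w hz hw
  have hζ : ‖ζ‖ < 1 := by
    rw [hζd, norm_div, div_lt_one (norm_pos_iff.mpr hzw)]
    apply lt_of_pow_lt_pow_left₀ 2 (norm_nonneg _)
    rw [← normSq_eq_norm_sq, ← normSq_eq_norm_sq, key]
    nlinarith [mul_pos hz hw]
  have hCζ : C ζ = z := by
    have := h1 ζ (by simpa using hζ)
    simp only [C]
    rw [div_eq_iff this, hζd]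
    field_simp
    ring
  have hle : ‖g ζ‖ ≤ ‖ζ‖ := by
    exact Complex.norm_le_norm_of_mapsTo_ball hg (hgm.mono_right Metric.ball_subset_closedBall) hg0 hζ
  have hle2 : normSq (g ζ) ≤ normSq ζ := by
    rw [normSq_eq_norm_sq, normSq_eq_norm_sq]; gcongr
  simp only [g, hCζ] at hle2
  rw [hζd, normSq_div, normSq_div, div_le_div_iff₀ (normSq_pos.mpr (ne _ _ (hm _ hz) (hm _ hw)))
    (normSq_pos.mpr hzw), key, key] at hle2
  nlinarith

/-- Schwarz–Pick, non-strict version. -/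
lemma aux_SP' {F : ℂ → ℂ} (hF : DifferentiableOn ℂ F {z | 0 < z.im})
    (hm : ∀ z : ℂ, 0 < z.im → 0 ≤ (F z).im) {z w : ℂ} (hz : 0 < z.im) (hw : 0 < w.im) :
    normSq (F z - F w) * (z.im * w.im) ≤ normSq (z - w) * ((F z).im * (F w).im) := by
  have h : ∀ d : ℝ, 0 < d →
      normSq (F z - F w) * (z.im * w.im) ≤ normSq (z - w) * (((F z).im + d) * ((F w).im + d)) := by
    intro d hd
    have := aux_SP (F := fun z => F z + d * I) (hF.add_const _)
      (fun z hz => by have := hm z hz; simp; linarith) hz hw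
    simpa using this
  have hc : ContinuousAt (fun d : ℝ => normSq (z - w) * (((F z).im + d) * ((F w).im + d))) 0 := by
    fun_prop
  have := ge_of_tendsto (hc.tendsto.mono_left nhdsWithin_le_nhds)
    (show ∀ᶠ d in 𝓝[>] (0:ℝ), _ from by
      filter_upwards [self_mem_nhdsWithin] with d hd using h d hd)
  simpa using this

lemma aux_C1_nhds {x : ℝ} (hx : x ∈ Set.Ioo (-1 : ℝ) 1) : C1 ∈ 𝓝 (x : ℂ) := by
  have : Complex.re ⁻¹' (Set.Ioo (-1 : ℝ) 1) ∈ 𝓝 (x : ℂ) :=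
    Complex.continuous_re.continuousAt.preimage_mem_nhds (by simpa using Ioo_mem_nhds hx.1 hx.2)
  exact Filter.mem_of_superset this fun z hz => Or.inr hz

lemma aux_C1_open {z : ℂ} (hz : z ∈ C1) : C1 ∈ 𝓝 z := by
  by_cases h : z.im = 0
  · have hr : z.re ∈ Set.Ioo (-1 : ℝ) 1 := by
      rcases hz with hz | hz
      · exact absurd h hz
      · exact hz
    have : z = (z.re : ℂ) := Complex.ext (by simp) (by simp [h])
    rw [this]; exact aux_C1_nhds hr
  · have : Complex.im ⁻¹' {0}ᶜ ∈ 𝓝 z :=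
      Complex.continuous_im.continuousAt.preimage_mem_nhds (isOpen_compl_singleton.mem_nhds h)
    exact Filter.mem_of_superset this fun z hz => Or.inl hz

lemma aux_analytic {c₁ c₂ c₃ c₄ : ℝ} {f : ℂ → ℂ} (hf : MemA1 c₁ c₂ c₃ c₄ f)
    {x : ℝ} (hx : x ∈ Set.Ioo (-1 : ℝ) 1) : AnalyticAt ℂ f x :=
  hf.holo.analyticAt (aux_C1_nhds hx)

lemma aux_im {c₁ c₂ c₃ c₄ : ℝ} {f : ℂ → ℂ} (hf : MemA1 c₁ c₂ c₃ c₄ f)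
    {x : ℝ} (hx : x ∈ Set.Ioo (-1 : ℝ) 1) : (f x).im = 0 := by
  have := hf.symm x (Or.inr (by simpa using hx))
  rw [Complex.conj_ofReal] at this
  exact Complex.conj_eq_iff_im.1 this.symm

lemma aux_lim {c₁ c₂ c₃ c₄ : ℝ} {f : ℂ → ℂ} (hf : MemA1 c₁ c₂ c₃ c₄ f)
    {x : ℝ} (hx : x ∈ Set.Ioo (-1 : ℝ) 1) :
    Tendsto (fun e : ℝ => (f (x + e * I)).im / e) (𝓝[>] 0)
      (𝓝 (deriv (fun y : ℝ => (f y).re) x)) := by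
  have hd := (aux_analytic hf hx).differentiableAt.hasDerivAt
  have h1 : deriv (fun y : ℝ => (f y).re) x = (deriv f x).re := hd.real_of_complex.deriv
  have hc : HasDerivAt (fun e : ℝ => (x : ℂ) + e * I) I 0 := by
    simpa using ((Complex.ofRealCLM.hasDerivAt (x := 0)).mul_const I).const_add (x : ℂ)
  have hd' : HasDerivAt f (deriv f x) ((x : ℂ) + (0 : ℝ) * I) := by simpa using hd
  have h2 := hd'.comp (0 : ℝ) hc
  have h3 : HasDerivAt (fun e : ℝ => (f (x + e * I)).im) (deriv f x).re 0 := by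
    have := Complex.imCLM.hasFDerivAt.comp_hasDerivAt (0 : ℝ) h2
    simpa [Function.comp_def] using this
  have h4 := (hasDerivAt_iff_tendsto_slope_zero.1 h3).mono_left
    (nhdsWithin_mono 0 (fun e (he : e ∈ Set.Ioi (0 : ℝ)) => (ne_of_gt he : e ≠ 0)) :
      𝓝[>] (0 : ℝ) ≤ 𝓝[≠] 0)
  rw [h1]
  simpa [aux_im hf hx, div_eq_inv_mul] using h4

lemma aux_loewner {c₁ c₂ c₃ c₄ : ℝ} {f : ℂ → ℂ} (hf : MemA1 c₁ c₂ c₃ c₄ f)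
    {x y : ℝ} (hx : x ∈ Set.Ioo (-1 : ℝ) 1) (hy : y ∈ Set.Ioo (-1 : ℝ) 1) :
    ((f y).re - (f x).re) ^ 2 ≤ (y - x) ^ 2 *
      (deriv (fun y : ℝ => (f y).re) x * deriv (fun y : ℝ => (f y).re) y) := by
  have hF : DifferentiableOn ℂ f {z | 0 < z.im} :=
    hf.holo.mono fun z hz => Or.inl (ne_of_gt hz)
  have hm : ∀ z : ℂ, 0 < z.im → 0 ≤ (f z).im := fun z hz => hf.upper z (Or.inl hz.ne') hz
  have hc : ∀ {x : ℝ}, x ∈ Set.Ioo (-1 : ℝ) 1 →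
      Tendsto (fun e : ℝ => f (x + e * I)) (𝓝[>] 0) (𝓝 (f x)) := by
    intro x hx
    have h1 : ContinuousAt f ((x : ℂ) + (0 : ℝ) * I) := by
      simpa using (aux_analytic hf hx).continuousAt
    have h2 : ContinuousAt (fun e : ℝ => (x : ℂ) + e * I) 0 := by fun_prop
    have := (ContinuousAt.comp (f := fun e : ℝ => (x : ℂ) + e * I) h1 h2).tendsto
    simpa [Function.comp_def] using this.mono_left nhdsWithin_le_nhds
  have hl : Tendsto (fun e : ℝ => normSq (f (y + e * I) - f (x + e * I))) (𝓝[>] 0)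
      (𝓝 (normSq (f y - f x))) :=
    (Complex.continuous_normSq.tendsto _).comp ((hc hy).sub (hc hx))
  have hr := ((aux_lim hf hx).mul (aux_lim hf hy)).const_mul ((y - x) ^ 2)
  have := le_of_tendsto_of_tendsto hl hr (by
    filter_upwards [self_mem_nhdsWithin] with e he
    have he' : 0 < e := he
    have := aux_SP' hF hm (z := y + e * I) (w := x + e * I) (by simpa using he') (by simpa using he')
    have h3 : normSq ((y : ℂ) + e * I - (x + e * I)) = (y - x) ^ 2 := by
      simp [normSq_apply]; ring
    rw [h3] at this
    simp only [add_im, ofReal_im, mul_im, ofReal_re, I_im, I_re, mul_one, mul_zero, add_zero,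
      zero_add] at this
    rw [div_mul_div_comm, ← mul_div_assoc, le_div_iff₀ (by positivity)]
    linarith)
  have h5 : normSq (f y - f x) = ((f y).re - (f x).re) ^ 2 := by
    simp [normSq_apply, aux_im hf hx, aux_im hf hy]; ring
  rwa [h5] at this

theorem stmt10 (c₁ c₂ c₃ c₄ : ℝ)
    (h1 : -1 < c₁) (h12 : c₁ < c₂) (h2 : c₂ < 1)
    (h3 : -1 < c₃) (h34 : c₃ < c₄) (h4 : c₄ < 1)
    (f : ℂ → ℂ) (hf : MemA1 c₁ c₂ c₃ c₄ f) :
    (∀ x ∈ Set.Ioo (-1 : ℝ) 1, 0 < deriv (fun y : ℝ => (f y).re) x) ∧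
    (∀ x ∈ Set.Ioo (-1 : ℝ) 1,
      3 * (deriv (deriv (fun y : ℝ => (f y).re)) x) ^ 2 /
          (2 * deriv (fun y : ℝ => (f y).re) x) ≤
        deriv (deriv (deriv (fun y : ℝ => (f y).re))) x) ∧
    (∀ x ∈ Set.Ioo (-1 : ℝ) 1,
      0 ≤ deriv (deriv (deriv (fun y : ℝ => (f y).re))) x /
            deriv (fun y : ℝ => (f y).re) x -
          (3 / 2) * (deriv (deriv (fun y : ℝ => (f y).re)) x /
            deriv (fun y : ℝ => (f y).re) x) ^ 2) := by
  have hpos : ∀ x ∈ Set.Ioo (-1 : ℝ) 1, 0 < deriv (fun y : ℝ => (f y).re) x := by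
    intro x hx
    have hnn : 0 ≤ deriv (fun y : ℝ => (f y).re) x := by
      refine ge_of_tendsto (aux_lim hf hx) ?_
      filter_upwards [self_mem_nhdsWithin] with e he
      have he' : 0 < e := he
      have hz : 0 < ((x : ℂ) + e * I).im := by simpa using he'
      exact div_nonneg (hf.upper _ (Or.inl hz.ne') hz) he'.le
    refine lt_of_le_of_ne hnn fun h0 => ?_
    have a1 := aux_loewner hf hx (y := c₁) ⟨h1, by linarith⟩
    have a2 := aux_loewner hf hx (y := c₂) ⟨by linarith, h2⟩
    rw [← h0, hf.val1] at a1
    rw [← h0, hf.val2] at a2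
    simp only [zero_mul, mul_zero, ofReal_re] at a1 a2
    have b1 := pow_eq_zero_iff (two_ne_zero) |>.1 (le_antisymm a1 (sq_nonneg _))
    have b2 := pow_eq_zero_iff (two_ne_zero) |>.1 (le_antisymm a2 (sq_nonneg _))
    linarith
  have main : ∀ x ∈ Set.Ioo (-1 : ℝ) 1, 3 * (deriv (deriv (fun y : ℝ => (f y).re)) x) ^ 2 ≤
      2 * deriv (fun y : ℝ => (f y).re) x * deriv (deriv (deriv (fun y : ℝ => (f y).re))) x := by
    intro x hx
    refine aux_taylor (aux_analytic hf hx).re_ofReal ?_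
    filter_upwards [Ioo_mem_nhds hx.1 hx.2] with y hy using aux_loewner hf hx hy
  refine ⟨hpos, fun x hx => ?_, fun x hx => ?_⟩
  · have hp := hpos x hx
    rw [div_le_iff₀ (by positivity)]
    linarith [main x hx]
  · have hp := hpos x hx
    have hM := main x hx
    generalize deriv (deriv (deriv (fun y : ℝ => (f y).re))) x = r at *
    generalize deriv (deriv (fun y : ℝ => (f y).re)) x = q at *
    generalize deriv (fun y : ℝ => (f y).re) x = p at *
    have : r / p - 3 / 2 * (q / p) ^ 2 = (2 * p * r - 3 * q ^ 2) / (2 * p ^ 2) := by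
      field_simp
    rw [this]
    exact div_nonneg (by linarith) (by positivity)
end
end

section
/- Let f ∈ A₁(c) and set t = f′(c₁), s = f′(c₂). Then for every x ∈ [c₁,c₂]: f″(x) ≥ −2·((c₂−x)·t + (x−c₁)·s)/((c₂−c₁)·(1+c₁)) and f″(x) ≤ 2·((c₂−x)·t + (x−c₁)·s)/((c₂−c₁)·(1−c₂)). -/
open Set Complex

noncomputable section

lemma coef_formula (F : ℂ → ℂ) (hF : DifferentiableOn ℂ F (Metric.ball 0 1)) (r : ℝ) (hr : 0 < r)
    (hr1 : r < 1) (m : ℕ) :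
    Real.pi * ((iteratedDeriv (m+1) F 0).re / ((m+1).factorial : ℝ) * r ^ (m+1))
      = ∫ θ in (0:ℝ)..2 * Real.pi, (F (circleMap 0 r θ)).im * Real.sin ((m+1 : ℕ) * θ) := by
  have hsub : Metric.closedBall (0:ℂ) r ⊆ Metric.ball 0 1 := Metric.closedBall_subset_ball hr1
  have e1 := (hF.mono hsub).circleIntegral_one_div_sub_center_pow_smul hr (m+1)
  have e2 : (∮ z in C(0, r), z ^ m * F z) = 0 := by
    apply DiffContOnCl.circleIntegral_eq_zero hr.le
    apply DifferentiableOn.diffContOnCl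
    rw [closure_ball _ hr.ne']
    exact ((differentiable_id.pow m).differentiableOn).mul (hF.mono hsub)
  have hcm : ∀ θ : ℝ, circleMap 0 r θ ∈ Metric.ball (0:ℂ) 1 := fun θ =>
    hsub (circleMap_mem_closedBall 0 hr.le θ)
  have hcont : Continuous fun θ : ℝ => F (circleMap 0 r θ) :=
    hF.continuousOn.comp_continuous (continuous_circleMap 0 r) hcm
  rw [circleIntegral_def_Icc, MeasureTheory.integral_Icc_eq_integral_Ioc,
    ← intervalIntegral.integral_of_le (by positivity)] at e1 e2
  have hr0 : (r:ℂ) ≠ 0 := by exact_mod_cast hr.ne'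
  have i1 : (fun θ : ℝ => deriv (circleMap 0 r) θ • ((1 / (circleMap 0 r θ - 0) ^ (m+1+1)) • F (circleMap 0 r θ)))
      = fun θ : ℝ => (I / r ^ (m+1)) * (F (circleMap 0 r θ) * exp (-(((m+1:ℕ) * θ : ℝ) * I))) := by
    funext θ
    have hE : exp (θ * I) ≠ 0 := exp_ne_zero _
    have : exp (-(((m+1:ℕ) * θ : ℝ) * I)) = (exp (θ * I) ^ (m+1))⁻¹ := by
      rw [← exp_nat_mul, ← exp_neg]; congr 1; push_cast; ring
    rw [this]
    simp only [deriv_circleMap, circleMap, zero_add, sub_zero, smul_eq_mul]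
    field_simp
    ring
  have i2 : (fun θ : ℝ => deriv (circleMap 0 r) θ • (circleMap 0 r θ ^ m * F (circleMap 0 r θ)))
      = fun θ : ℝ => (I * r ^ (m+1)) * (F (circleMap 0 r θ) * exp (((m+1:ℕ) * θ : ℝ) * I)) := by
    funext θ
    have : exp (((m+1:ℕ) * θ : ℝ) * I) = exp (θ * I) ^ (m+1) := by
      rw [← exp_nat_mul]; congr 1; push_cast; ring
    rw [this]
    simp only [deriv_circleMap, circleMap, zero_add, smul_eq_mul]
    ring
  rw [i1, intervalIntegral.integral_const_mul] at e1
  rw [i2, intervalIntegral.integral_const_mul] at e2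
  have e2' := (mul_eq_zero.1 e2).resolve_left (by simp [hr0])
  have e1' : ∫ θ in (0:ℝ)..2 * Real.pi, F (circleMap 0 r θ) * exp (-(((m+1:ℕ) * θ : ℝ) * I))
      = 2 * Real.pi * (iteratedDeriv (m+1) F 0 / (m+1).factorial * r ^ (m+1)) := by
    have hfac : ((m+1).factorial : ℂ) ≠ 0 := by exact_mod_cast (Nat.factorial_pos _).ne'
    rw [smul_eq_mul] at e1
    have : I / (r:ℂ) ^ (m+1) ≠ 0 := by simp [hr0]
    apply mul_left_cancel₀ this
    rw [e1]; field_simp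
  have e3 := congrArg Complex.re (congrArg₂ (· - ·) e1' e2')
  simp only [sub_zero] at e3
  have k1 : Continuous fun θ : ℝ => F (circleMap 0 r θ) * exp (-(((m+1:ℕ) * θ : ℝ) * I)) :=
    hcont.mul (by fun_prop)
  have k2 : Continuous fun θ : ℝ => F (circleMap 0 r θ) * exp (((m+1:ℕ) * θ : ℝ) * I) :=
    hcont.mul (by fun_prop)
  rw [← intervalIntegral.integral_sub (k1.intervalIntegrable _ _)
    (k2.intervalIntegrable _ _)] at e3
  have e4 := reCLM.intervalIntegral_comp_comm (μ := MeasureTheory.volume) (a := 0) (b := 2 * Real.pi)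
    (f := fun θ : ℝ => F (circleMap 0 r θ) * exp (-(((m+1:ℕ) * θ : ℝ) * I)) - F (circleMap 0 r θ) * exp (((m+1:ℕ) * θ : ℝ) * I))
    (Continuous.intervalIntegrable (k1.sub k2) _ _)
  simp only [reCLM_apply] at e4
  rw [← e4] at e3
  have i3 : (fun θ : ℝ => (F (circleMap 0 r θ) * exp (-(((m+1:ℕ) * θ : ℝ) * I)) - F (circleMap 0 r θ) * exp (((m+1:ℕ) * θ : ℝ) * I)).re)
     = fun θ : ℝ => 2 * ((F (circleMap 0 r θ)).im * Real.sin ((m+1 : ℕ) * θ)) := by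
    funext θ
    rw [← neg_mul, ← ofReal_neg]
    simp only [sub_re, mul_re, exp_ofReal_mul_I_re, exp_ofReal_mul_I_im, Real.cos_neg, Real.sin_neg]
    ring
  rw [i3, intervalIntegral.integral_const_mul] at e3
  have e5 : (2 * (Real.pi:ℂ) * (iteratedDeriv (m+1) F 0 / (m+1).factorial * r ^ (m+1))).re
     = 2 * (Real.pi * ((iteratedDeriv (m+1) F 0).re / ((m+1).factorial : ℝ) * r ^ (m+1))) := by
    have : (2 * (Real.pi:ℂ) * (iteratedDeriv (m+1) F 0 / (m+1).factorial * r ^ (m+1)))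
      = ((2 * Real.pi / (m+1).factorial * r ^ (m+1) : ℝ) : ℂ) * iteratedDeriv (m+1) F 0 := by
      push_cast; ring
    rw [this, re_ofReal_mul]; ring
  rw [e5] at e3
  linarith

lemma coef_ineq (F : ℂ → ℂ) (hF : DifferentiableOn ℂ F (Metric.ball 0 1))
    (hs : ∀ w ∈ Metric.ball (0:ℂ) 1, 0 ≤ (F w).im * w.im) :
    (iteratedDeriv 2 F 0).re ≤ 4 * (iteratedDeriv 1 F 0).re ∧
    -(4 * (iteratedDeriv 1 F 0).re) ≤ (iteratedDeriv 2 F 0).re ∧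
    -(6 * (iteratedDeriv 1 F 0).re) ≤ (iteratedDeriv 3 F 0).re := by
  set d1 := (iteratedDeriv 1 F 0).re
  set d2 := (iteratedDeriv 2 F 0).re
  set d3 := (iteratedDeriv 3 F 0).re
  have key : ∀ r : ℝ, r ∈ Ioo (0:ℝ) 1 → 0 ≤ 2 * (d1 * r) - d2 / 2 * r ^ 2 ∧
      0 ≤ 2 * (d1 * r) + d2 / 2 * r ^ 2 ∧ 0 ≤ d1 * r + d3 / 6 * r ^ 3 := by
    rintro r ⟨hr, hr1⟩
    have hsub : Metric.closedBall (0:ℂ) r ⊆ Metric.ball 0 1 := Metric.closedBall_subset_ball hr1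
    have hcm : ∀ θ : ℝ, circleMap 0 r θ ∈ Metric.ball (0:ℂ) 1 := fun θ =>
      hsub (circleMap_mem_closedBall 0 hr.le θ)
    have hcont : Continuous fun θ : ℝ => F (circleMap 0 r θ) :=
      hF.continuousOn.comp_continuous (continuous_circleMap 0 r) hcm
    have hpos : ∀ θ : ℝ, 0 ≤ (F (circleMap 0 r θ)).im * Real.sin θ := by
      intro θ
      have := hs _ (hcm θ)
      have him : (circleMap 0 r θ).im = r * Real.sin θ := by
        simp only [circleMap, zero_add, im_ofReal_mul, exp_ofReal_mul_I_im]
      rw [him] at this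
      by_contra hneg
      push Not at hneg
      nlinarith
    have q1 := coef_formula F hF r hr hr1 0
    have q2 := coef_formula F hF r hr hr1 1
    have q3 := coef_formula F hF r hr hr1 2
    have hc : ∀ n : ℕ, IntervalIntegrable (fun θ : ℝ => (F (circleMap 0 r θ)).im * Real.sin (n * θ))
        MeasureTheory.volume 0 (2 * Real.pi) := fun n =>
      Continuous.intervalIntegrable ((continuous_im.comp hcont).mul (by fun_prop)) _ _
    have hI : ∀ a b c : ℝ, (∀ θ : ℝ, 0 ≤ a * ((F (circleMap 0 r θ)).im * Real.sin ((1:ℕ) * θ)) +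
        b * ((F (circleMap 0 r θ)).im * Real.sin ((2:ℕ) * θ)) +
        c * ((F (circleMap 0 r θ)).im * Real.sin ((3:ℕ) * θ))) →
        0 ≤ a * (d1 * r) + b * (d2 / 2 * r ^ 2) + c * (d3 / 6 * r ^ 3) := by
      intro a b c h
      have h0 := intervalIntegral.integral_nonneg (μ := MeasureTheory.volume)
        (a := 0) (b := 2 * Real.pi) (by positivity) (fun θ _ => h θ)
      rw [intervalIntegral.integral_add (((hc 1).const_mul a).add ((hc 2).const_mul b)) ((hc 3).const_mul c),
        intervalIntegral.integral_add ((hc 1).const_mul a) ((hc 2).const_mul b),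
        intervalIntegral.integral_const_mul, intervalIntegral.integral_const_mul,
        intervalIntegral.integral_const_mul] at h0
      norm_num [Nat.factorial] at q1 q2 q3 h0
      rw [← q1, ← q2, ← q3] at h0
      have : 0 ≤ Real.pi * (a * (d1 * r) + b * (d2 / 2 * r ^ 2) + c * (d3 / 6 * r ^ 3)) := by
        convert h0 using 1
        simp only [d1, d2, d3, iteratedDeriv_one]
        ring
      exact nonneg_of_mul_nonneg_right this Real.pi_pos
    refine ⟨?_, ?_, ?_⟩
    · have := hI 2 (-1) 0 (fun θ => by
        push_cast
        rw [Real.sin_two_mul, one_mul]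
        have := mul_nonneg (hpos θ) (sub_nonneg.2 (Real.cos_le_one θ))
        nlinarith)
      linarith
    · have := hI 2 1 0 (fun θ => by
        push_cast
        rw [Real.sin_two_mul, one_mul]
        have := mul_nonneg (hpos θ) (by linarith [Real.neg_one_le_cos θ] : 0 ≤ 1 + Real.cos θ)
        nlinarith)
      linarith
    · have := hI 1 0 1 (fun θ => by
        push_cast
        simp only [Real.sin_three_mul, one_mul, zero_mul, add_zero]
        have := mul_nonneg (hpos θ) (sq_nonneg (Real.cos θ))
        have h2 : Real.sin θ ^ 3 = Real.sin θ * (1 - Real.cos θ ^ 2) := by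
          rw [← Real.sin_sq]; ring
        rw [h2]
        nlinarith)
      linarith
  have lim : ∀ p : ℝ → ℝ, Continuous p → (∀ r ∈ Ioo (0:ℝ) 1, 0 ≤ p r) → 0 ≤ p 1 := by
    intro p hp h
    have : (1:ℝ) ∈ closure (Ioo (0:ℝ) 1) := by
      rw [closure_Ioo (by norm_num)]; simp
    exact closure_minimal (s := Ioo (0:ℝ) 1) (t := {r | 0 ≤ p r}) h (isClosed_le continuous_const hp) this
  have l1 := lim (fun r => 2 * (d1 * r) - d2 / 2 * r ^ 2) (by fun_prop) (fun r hr => (key r hr).1)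
  have l2 := lim (fun r => 2 * (d1 * r) + d2 / 2 * r ^ 2) (by fun_prop) (fun r hr => (key r hr).2.1)
  have l3 := lim (fun r => d1 * r + d3 / 6 * r ^ 3) (by fun_prop) (fun r hr => (key r hr).2.2)
  norm_num at l1 l2 l3
  refine ⟨?_, ?_, ?_⟩ <;> linarith

lemma den_ne_s11 (y : ℝ) (hy : y ∈ Ioo (-1:ℝ) 1) (w : ℂ) (hw : w ∈ Metric.ball (0:ℂ) 1) :
    1 + 2 * (y:ℂ) * w + w ^ 2 ≠ 0 := by
  intro h
  have hn : w.re ^ 2 + w.im ^ 2 < 1 := by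
    rw [mem_ball_zero_iff] at hw
    have := Complex.sq_norm w
    rw [normSq_apply] at this
    nlinarith [norm_nonneg w]
  have hre := congrArg re h
  have him := congrArg im h
  simp [pow_two] at hre him
  have : w.im * (y + w.re) = 0 := by linarith
  obtain ⟨h1, h2⟩ := hy
  rcases mul_eq_zero.1 this with h0 | h0
  · rw [h0] at hre
    nlinarith [sq_nonneg (w.re + y)]
  · have : y = -w.re := by linarith
    subst this
    nlinarith

/-- Koebe-type map of the disc onto a doubly slit plane. -/
def koebe (x k y : ℝ) (w : ℂ) : ℂ := x + 2 * k * w / (1 + 2 * (y:ℂ) * w + w ^ 2)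

lemma koebe_im (x k y : ℝ) (w : ℂ) :
    (koebe x k y w).im = 2 * k * w.im * (1 - normSq w) / normSq (1 + 2 * (y:ℂ) * w + w ^ 2) := by
  have h : koebe x k y w = x + ((2 * k : ℝ) : ℂ) * (w / (1 + 2 * (y:ℂ) * w + w ^ 2)) := by
    simp only [koebe]; push_cast; ring
  rw [h, add_im, ofReal_im, im_ofReal_mul, Complex.div_im]
  set q := normSq (1 + 2 * (y:ℂ) * w + w ^ 2)
  simp [pow_two, normSq_apply]
  ring

lemma normSq_lt (w : ℂ) (hw : w ∈ Metric.ball (0:ℂ) 1) : 0 < 1 - normSq w := by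
  rw [mem_ball_zero_iff] at hw
  have := Complex.sq_norm w
  nlinarith [norm_nonneg w]

lemma koebe_mem (x k y : ℝ) (hy : y ∈ Ioo (-1:ℝ) 1) (hk : 0 < k)
    (hk1 : k ≤ (1 - x) * (1 + y)) (hk2 : k ≤ (1 + x) * (1 - y)) (w : ℂ)
    (hw : w ∈ Metric.ball (0:ℂ) 1) : koebe x k y w ∈ C1 := by
  have hD := den_ne_s11 y hy w hw
  have hq := normSq_pos.2 hD
  by_cases hb : w.im = 0
  · right
    obtain ⟨h1, h2⟩ := hy
    have hwr : w = (w.re : ℂ) := by apply Complex.ext <;> simp [hb]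
    have ha := normSq_lt w hw
    set a := w.re
    rw [hwr, normSq_ofReal] at ha
    have hD' : 0 < 1 + 2 * y * a + a ^ 2 := by nlinarith [sq_nonneg (a + y)]
    have : koebe x k y w = ((x + 2 * k * a / (1 + 2 * y * a + a ^ 2) : ℝ) : ℂ) := by
      rw [hwr]; simp only [koebe]; push_cast; rfl
    rw [this, ofReal_re]
    have ha1 : a < 1 := by nlinarith
    have ha2 : -1 < a := by nlinarith
    have hx1 : 0 < 1 - x := by
      by_contra hc; push Not at hc; nlinarith
    have hx2 : 0 < 1 + x := by
      by_contra hc; push Not at hc; nlinarith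
    constructor
    · have : -(1 + x) < 2 * k * a / (1 + 2 * y * a + a ^ 2) := by
        rw [lt_div_iff₀ hD']
        have e1 : 0 < (1 + x) * (1 + a) ^ 2 := mul_pos hx2 (by nlinarith)
        rcases le_total 0 a with h | h
        · have : 0 ≤ 2 * k * a := by positivity
          nlinarith [mul_pos hx2 hD']
        · nlinarith [mul_nonneg (sub_nonneg.2 hk2) (neg_nonneg.2 h)]
      linarith
    · have : 2 * k * a / (1 + 2 * y * a + a ^ 2) < 1 - x := by
        rw [div_lt_iff₀ hD']
        have e1 : 0 < (1 - x) * (1 - a) ^ 2 := mul_pos hx1 (by nlinarith)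
        rcases le_total 0 a with h | h
        · nlinarith [mul_nonneg (sub_nonneg.2 hk1) h]
        · have : 0 ≤ 2 * k * (-a) := mul_nonneg (by positivity) (by linarith)
          nlinarith [mul_pos hx1 hD']
      linarith
  · left
    rw [koebe_im]
    have := normSq_lt w hw
    have : 2 * k * w.im * (1 - normSq w) ≠ 0 := by
      apply mul_ne_zero (mul_ne_zero (by positivity) hb) this.ne'
    exact div_ne_zero this hq.ne'

lemma koebe_derivs (x k y : ℝ) (hy : y ∈ Ioo (-1:ℝ) 1) :
    AnalyticOnNhd ℂ (koebe x k y) (Metric.ball 0 1) ∧ koebe x k y 0 = x ∧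
    deriv (koebe x k y) 0 = 2 * k ∧ iteratedDeriv 2 (koebe x k y) 0 = -8 * k * y ∧
    iteratedDeriv 3 (koebe x k y) 0 = 12 * k * (4 * y ^ 2 - 1) := by
  have hDd : ∀ w : ℂ, HasDerivAt (fun w : ℂ => 1 + 2 * (y:ℂ) * w + w ^ 2) (2 * y + 2 * w) w := by
    intro w
    have := (((hasDerivAt_id w).const_mul (2 * (y:ℂ))).const_add 1).add ((hasDerivAt_id w).pow 2)
    refine this.congr_deriv ?_
    simp
  have h1 : ∀ w ∈ Metric.ball (0:ℂ) 1, HasDerivAt (koebe x k y)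
      (2 * k * (1 - w ^ 2) / (1 + 2 * (y:ℂ) * w + w ^ 2) ^ 2) w := by
    intro w hw
    have hD := den_ne_s11 y hy w hw
    have := (((hasDerivAt_id w).const_mul (2 * (k:ℂ))).div (hDd w) hD).const_add (x:ℂ)
    refine this.congr_deriv ?_
    simp only [id]
    congr 1
    ring
  have h2 : ∀ w ∈ Metric.ball (0:ℂ) 1,
      HasDerivAt (fun w : ℂ => 2 * k * (1 - w ^ 2) / (1 + 2 * (y:ℂ) * w + w ^ 2) ^ 2)
      (2 * k * (-2 * w * (1 + 2 * (y:ℂ) * w + w ^ 2) - 2 * (1 - w ^ 2) * (2 * y + 2 * w))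
        / (1 + 2 * (y:ℂ) * w + w ^ 2) ^ 3) w := by
    intro w hw
    have hD := den_ne_s11 y hy w hw
    have := (((hasDerivAt_pow 2 w).const_sub 1).const_mul (2 * (k:ℂ))).div ((hDd w).pow 2)
      (pow_ne_zero 2 hD)
    refine this.congr_deriv ?_
    simp
    field_simp
  have h3 : HasDerivAt (fun w : ℂ => 2 * k * (-2 * w * (1 + 2 * (y:ℂ) * w + w ^ 2) - 2 * (1 - w ^ 2) * (2 * y + 2 * w))
        / (1 + 2 * (y:ℂ) * w + w ^ 2) ^ 3) (12 * (k:ℂ) * (4 * (y:ℂ) ^ 2 - 1)) 0 := by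
    have hl : HasDerivAt (fun w : ℂ => 2 * (y:ℂ) + 2 * w) 2 0 := by
      simpa using ((hasDerivAt_id (0:ℂ)).const_mul 2).const_add (2 * (y:ℂ))
    have hl2 : HasDerivAt (fun w : ℂ => -2 * w) (-2) 0 := by
      simpa using ((hasDerivAt_id (0:ℂ)).const_mul (-2))
    have := (((hl2.mul (hDd 0)).sub ((((hasDerivAt_pow 2 (0:ℂ)).const_sub 1).const_mul 2).mul hl)).const_mul
      (2 * (k:ℂ))).div ((hDd 0).pow 3) (by simp)
    refine this.congr_deriv ?_
    simp
    ring
  have h0 : (0:ℂ) ∈ Metric.ball (0:ℂ) 1 := by simp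
  have hnh : Metric.ball (0:ℂ) 1 ∈ nhds (0:ℂ) := Metric.isOpen_ball.mem_nhds h0
  have d1 : EqOn (deriv (koebe x k y)) (fun w : ℂ => 2 * k * (1 - w ^ 2) / (1 + 2 * (y:ℂ) * w + w ^ 2) ^ 2)
    (Metric.ball 0 1) := fun w hw => (h1 w hw).deriv
  have d2 : EqOn (deriv (deriv (koebe x k y))) (fun w : ℂ => 2 * k * (-2 * w * (1 + 2 * (y:ℂ) * w + w ^ 2) - 2 * (1 - w ^ 2) * (2 * y + 2 * w))
        / (1 + 2 * (y:ℂ) * w + w ^ 2) ^ 3) (Metric.ball 0 1) := fun w hw => by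
    rw [(d1.eventuallyEq_of_mem (Metric.isOpen_ball.mem_nhds hw)).deriv_eq]
    exact (h2 w hw).deriv
  refine ⟨?_, ?_, ?_, ?_, ?_⟩
  · apply DifferentiableOn.analyticOnNhd _ Metric.isOpen_ball
    exact fun w hw => (h1 w hw).differentiableAt.differentiableWithinAt
  · simp [koebe]
  · rw [d1 h0]; simp
  · rw [iteratedDeriv_succ, iteratedDeriv_one, d2 h0]; simp; ring
  · rw [iteratedDeriv_succ, iteratedDeriv_succ, iteratedDeriv_one, (d2.eventuallyEq_of_mem hnh).deriv_eq]
    exact h3.deriv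

lemma comp_ineq {c₁ c₂ c₃ c₄ : ℝ} {f : ℂ → ℂ} (hf : MemA1 c₁ c₂ c₃ c₄ f)
    (x k y : ℝ) (hy : y ∈ Ioo (-1:ℝ) 1) (hk : 0 < k)
    (hk1 : k ≤ (1 - x) * (1 + y)) (hk2 : k ≤ (1 + x) * (1 - y)) :
    4 * k ^ 2 * (iteratedDeriv 2 f x).re - 8 * k * y * (deriv f x).re ≤ 8 * k * (deriv f x).re ∧
    -(8 * k * (deriv f x).re) ≤ 4 * k ^ 2 * (iteratedDeriv 2 f x).re - 8 * k * y * (deriv f x).re ∧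
    -(12 * k * (deriv f x).re) ≤ 8 * k ^ 3 * (iteratedDeriv 3 f x).re
      - 48 * k ^ 2 * y * (iteratedDeriv 2 f x).re
      + 12 * k * (4 * y ^ 2 - 1) * (deriv f x).re := by
  obtain ⟨ha, hv, g1, g2, g3⟩ := koebe_derivs x k y hy
  have hmem := koebe_mem x k y hy hk hk1 hk2
  have h0 : (0:ℂ) ∈ Metric.ball (0:ℂ) 1 := by simp
  have hx := hmem 0 h0
  rw [hv] at hx
  have hfa := hf.holo.analyticOnNhd isOpen_C1
  have hfx : AnalyticAt ℂ f (koebe x k y 0) := by rw [hv]; exact hfa _ hx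
  have hF : DifferentiableOn ℂ (f ∘ koebe x k y) (Metric.ball 0 1) :=
    hf.holo.comp ha.differentiableOn hmem
  have hs : ∀ w ∈ Metric.ball (0:ℂ) 1, 0 ≤ ((f ∘ koebe x k y) w).im * w.im := by
    intro w hw
    have hq := normSq_pos.2 (den_ne_s11 y hy w hw)
    have hn := normSq_lt w hw
    have him := koebe_im x k y w
    rcases lt_trichotomy w.im 0 with h | h | h
    · apply mul_nonneg_of_nonpos_of_nonpos _ h.le
      apply hf.lower _ (hmem w hw)
      rw [him]
      apply div_neg_of_neg_of_pos _ hq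
      exact mul_neg_of_neg_of_pos (mul_neg_of_pos_of_neg (by positivity) h) hn
    · simp [h]
    · apply mul_nonneg _ h.le
      apply hf.upper _ (hmem w hw)
      rw [him]
      positivity
  obtain ⟨l1, l2, l3⟩ := coef_ineq _ hF hs
  have e1 : (iteratedDeriv 1 (f ∘ koebe x k y) 0).re = 2 * k * (deriv f x).re := by
    rw [iteratedDeriv_one, deriv_comp _ hfx.differentiableAt (ha 0 h0).differentiableAt, g1, hv]
    rw [← re_ofReal_mul]; congr 1; push_cast; ring
  have e2 : (iteratedDeriv 2 (f ∘ koebe x k y) 0).re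
      = 4 * k ^ 2 * (iteratedDeriv 2 f x).re - 8 * k * y * (deriv f x).re := by
    rw [iteratedDeriv_comp_two hfx.contDiffAt (ha 0 h0).contDiffAt, g1, g2, hv]
    rw [← re_ofReal_mul, ← re_ofReal_mul, ← sub_re]; congr 1; push_cast; ring
  have e3 : (iteratedDeriv 3 (f ∘ koebe x k y) 0).re = 8 * k ^ 3 * (iteratedDeriv 3 f x).re
      - 48 * k ^ 2 * y * (iteratedDeriv 2 f x).re
      + 12 * k * (4 * y ^ 2 - 1) * (deriv f x).re := by
    rw [iteratedDeriv_comp_three hfx.contDiffAt (ha 0 h0).contDiffAt, g1, g2, g3, hv]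
    rw [← re_ofReal_mul, ← re_ofReal_mul, ← re_ofReal_mul, ← sub_re, ← add_re]
    congr 1; push_cast; ring
  rw [e1] at l1 l2 l3
  rw [e2] at l1 l2
  rw [e3] at l3
  refine ⟨?_, ?_, ?_⟩ <;> linarith

lemma second_ineq {c₁ c₂ c₃ c₄ : ℝ} {f : ℂ → ℂ} (hf : MemA1 c₁ c₂ c₃ c₄ f)
    (x : ℝ) (hx : x ∈ Ioo (-1:ℝ) 1) :
    (1 - x) * (iteratedDeriv 2 f x).re ≤ 2 * (deriv f x).re ∧
    -(2 * (deriv f x).re) ≤ (1 + x) * (iteratedDeriv 2 f x).re ∧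
    0 ≤ (iteratedDeriv 3 f x).re ∧ 0 ≤ (deriv f x).re := by
  obtain ⟨h1, h2⟩ := hx
  have p1 : 0 < 1 + x := by linarith
  have p2 : 0 < 1 - x := by linarith
  have hk : 0 < 1 - x ^ 2 := by nlinarith
  obtain ⟨l1, l2, -⟩ := comp_ineq hf x (1 - x ^ 2) x ⟨h1, h2⟩ hk (by nlinarith) (by nlinarith)
  obtain ⟨-, -, l3⟩ := comp_ineq hf x (min (1 - x) (1 + x)) 0 (by norm_num) (lt_min p2 p1)
    (by simp) (by simp)
  have hm : 0 < min (1 - x) (1 + x) := lt_min p2 p1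
  set m := min (1 - x) (1 + x)
  set A := (deriv f x).re
  set B := (iteratedDeriv 2 f x).re
  set T := (iteratedDeriv 3 f x).re
  refine ⟨?_, ?_, ?_, ?_⟩
  · have : (4 * (1 - x ^ 2) * (1 + x)) * ((1 - x) * B) ≤ (4 * (1 - x ^ 2) * (1 + x)) * (2 * A) := by
      nlinarith
    exact le_of_mul_le_mul_left this (by positivity)
  · have : (4 * (1 - x ^ 2) * (1 - x)) * (-(2 * A)) ≤ (4 * (1 - x ^ 2) * (1 - x)) * ((1 + x) * B) := by
      nlinarith
    exact le_of_mul_le_mul_left this (by positivity)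
  · have : 0 ≤ 8 * m ^ 3 * T := by linarith
    exact nonneg_of_mul_nonneg_right this (by positivity)
  · have : 0 ≤ (16 * (1 - x ^ 2)) * A := by linarith
    exact nonneg_of_mul_nonneg_right this (by positivity)

theorem stmt11 (c₁ c₂ c₃ c₄ : ℝ)
    (h1 : -1 < c₁) (h12 : c₁ < c₂) (h2 : c₂ < 1)
    (h3 : -1 < c₃) (h34 : c₃ < c₄) (h4 : c₄ < 1)
    (f : ℂ → ℂ) (hf : MemA1 c₁ c₂ c₃ c₄ f)
    (t s : ℝ)
    (ht : t = deriv (fun y : ℝ => (f y).re) c₁)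
    (hs : s = deriv (fun y : ℝ => (f y).re) c₂) :
    ∀ x ∈ Set.Icc c₁ c₂,
      -2 * ((c₂ - x) * t + (x - c₁) * s) / ((c₂ - c₁) * (1 + c₁)) ≤
          deriv (deriv (fun y : ℝ => (f y).re)) x ∧
        deriv (deriv (fun y : ℝ => (f y).re)) x ≤
          2 * ((c₂ - x) * t + (x - c₁) * s) / ((c₂ - c₁) * (1 - c₂)) := by
  have hU : ∀ x : ℝ, x ∈ Ioo (-1:ℝ) 1 → (x : ℂ) ∈ C1 := fun x hx => Or.inr (by simpa using hx)
  have hfa := hf.holo.analyticOnNhd isOpen_C1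
  have step : ∀ g : ℂ → ℂ, AnalyticOnNhd ℂ g C1 → ∀ x ∈ Ioo (-1:ℝ) 1,
      HasDerivAt (fun y : ℝ => (g y).re) (deriv g x).re x := fun g hg x hx =>
    (hg x (hU x hx)).differentiableAt.hasDerivAt.real_of_complex
  have D1 : EqOn (deriv (fun y : ℝ => (f y).re)) (fun y : ℝ => (deriv f y).re) (Ioo (-1:ℝ) 1) :=
    fun x hx => (step f hfa x hx).deriv
  have H2 : ∀ x ∈ Ioo (-1:ℝ) 1, HasDerivAt (deriv (fun y : ℝ => (f y).re))
      (iteratedDeriv 2 f x).re x := fun x hx => by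
    rw [iteratedDeriv_succ, iteratedDeriv_one]
    exact (step _ hfa.deriv x hx).congr_of_eventuallyEq
      (D1.eventuallyEq_of_mem (isOpen_Ioo.mem_nhds hx))
  have H3 : ∀ x ∈ Ioo (-1:ℝ) 1, HasDerivAt (deriv (deriv (fun y : ℝ => (f y).re)))
      (iteratedDeriv 3 f x).re x := fun x hx => by
    have D2 : EqOn (deriv (deriv (fun y : ℝ => (f y).re))) (fun y : ℝ => (deriv (deriv f) y).re)
        (Ioo (-1:ℝ) 1) := fun x hx => by
      rw [(H2 x hx).deriv, iteratedDeriv_succ, iteratedDeriv_one]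
    rw [iteratedDeriv_succ, iteratedDeriv_succ, iteratedDeriv_one]
    exact (step _ hfa.deriv.deriv x hx).congr_of_eventuallyEq
      (D2.eventuallyEq_of_mem (isOpen_Ioo.mem_nhds hx))
  have hconv : ConvexOn ℝ (Ioo (-1:ℝ) 1) (deriv (fun y : ℝ => (f y).re)) := by
    apply convexOn_of_deriv2_nonneg' (convex_Ioo _ _)
      (fun x hx => (H2 x hx).differentiableAt.differentiableWithinAt)
      (fun x hx => (H3 x hx).differentiableAt.differentiableWithinAt)
    intro x hx
    change 0 ≤ deriv (deriv (deriv (fun y : ℝ => (f y).re))) x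
    rw [(H3 x hx).deriv]
    exact (second_ineq hf x hx).2.2.1
  rintro x ⟨hx1, hx2⟩
  have hx : x ∈ Ioo (-1:ℝ) 1 := ⟨by linarith, by linarith⟩
  obtain ⟨b1, b2, -, b3⟩ := second_ineq hf x hx
  have hd : 0 < c₂ - c₁ := by linarith
  have hc := hconv.2 (⟨by linarith, by linarith⟩ : c₁ ∈ Ioo (-1:ℝ) 1)
    (⟨by linarith, by linarith⟩ : c₂ ∈ Ioo (-1:ℝ) 1)
    (div_nonneg (by linarith) hd.le : 0 ≤ (c₂ - x) / (c₂ - c₁))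
    (div_nonneg (by linarith) hd.le : 0 ≤ (x - c₁) / (c₂ - c₁)) (by field_simp; ring)
  simp only [smul_eq_mul] at hc
  have hxe : (c₂ - x) / (c₂ - c₁) * c₁ + (x - c₁) / (c₂ - c₁) * c₂ = x := by
    field_simp; ring
  rw [hxe, ← ht, ← hs, D1 hx] at hc
  simp only at hc
  have hc' : (c₂ - c₁) * (deriv f x).re ≤ (c₂ - x) * t + (x - c₁) * s := by
    have := mul_le_mul_of_nonneg_left hc hd.le
    refine this.trans_eq ?_
    field_simp
  rw [(H2 x hx).deriv]
  set A := (deriv f x).re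
  set B := (iteratedDeriv 2 f x).re
  set L := (c₂ - x) * t + (x - c₁) * s
  have hp1 : 0 < 1 + c₁ := by linarith
  have hp2 : 0 < 1 - c₂ := by linarith
  constructor
  · rw [div_le_iff₀ (by positivity)]
    have q : -(2 * A) ≤ (1 + c₁) * B := by
      rcases le_total 0 B with h | h
      · have := mul_nonneg hp1.le h
        linarith
      · nlinarith
    nlinarith [mul_le_mul_of_nonneg_left q hd.le]
  · rw [le_div_iff₀ (by positivity)]
    have q : (1 - c₂) * B ≤ 2 * A := by
      rcases le_total 0 B with h | h
      · nlinarith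
      · have := mul_nonneg hp2.le (neg_nonneg.2 h)
        linarith
    nlinarith [mul_le_mul_of_nonneg_left q hd.le]
end
end

section
/- Let f ∈ A₁(c), set s = f′(c₂), and let M be a real number such that f(x) ≤ M for all x ∈ (−1,1). Then for every x ∈ (c₂,1): f(x) ≤ c₄ + s·(x−c₂) + (M − c₄ − s·(1−c₂))·(x−c₂)²/(1−c₂)². -/
open Set Complex

noncomputable section

lemma schwarz_pick_strict (F : ℂ → ℂ) (hF : DifferentiableOn ℂ F {z | 0 < z.im})
    (hpos : ∀ z : ℂ, 0 < z.im → 0 < (F z).im) (z w : ℂ) (hz : 0 < z.im) (hw : 0 < w.im) :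
    normSq (F z - F w) * (z.im * w.im) ≤ normSq (z - w) * ((F z).im * (F w).im) := by
  have key : ∀ a b : ℂ, normSq (a - starRingEnd ℂ b) = normSq (a - b) + 4 * (a.im * b.im) := by
    intro a b
    simp [normSq_apply]; ring
  have hne : ∀ a b : ℂ, 0 < a.im → 0 < b.im → a - starRingEnd ℂ b ≠ 0 := by
    intro a b ha hb h
    have := congrArg Complex.im h
    simp at this
    linarith
  have hlt : ∀ a b : ℂ, 0 < a.im → 0 < b.im → ‖(a - b) / (a - starRingEnd ℂ b)‖ < 1 := by
    intro a b ha hb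
    rw [norm_div, div_lt_one (norm_pos_iff.2 (hne a b ha hb))]
    apply lt_of_pow_lt_pow_left₀ 2 (norm_nonneg _)
    rw [← normSq_eq_norm_sq, ← normSq_eq_norm_sq, key]
    nlinarith [mul_pos ha hb]
  set φ : ℂ → ℂ := fun ζ => (w - starRingEnd ℂ w * ζ) / (1 - ζ) with hφ
  have h1 : ∀ ζ : ℂ, ‖ζ‖ < 1 → 1 - ζ ≠ 0 := by
    intro ζ h h0
    have : ζ = 1 := by linear_combination -h0
    rw [this] at h
    simp at h
  have hφim : ∀ ζ : ℂ, ‖ζ‖ < 1 → 0 < (φ ζ).im := by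
    intro ζ h
    have hn : 0 < normSq (1 - ζ) := normSq_pos.2 (h1 ζ h)
    have hs : normSq ζ < 1 := by
      rw [normSq_eq_norm_sq]
      nlinarith [norm_nonneg ζ]
    have : (φ ζ).im = w.im * (1 - normSq ζ) / normSq (1 - ζ) := by
      simp only [hφ, div_im]
      rw [← sub_div]
      congr 1
      simp [normSq_apply]; ring
    rw [this]
    have : 0 < 1 - normSq ζ := by linarith
    positivity
  set G : ℂ → ℂ := fun ζ => (F (φ ζ) - F w) / (F (φ ζ) - starRingEnd ℂ (F w)) with hG
  have hφd : DifferentiableOn ℂ φ (Metric.ball 0 1) := by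
    intro ζ h
    have := h1 ζ (by simpa using h)
    apply DifferentiableAt.differentiableWithinAt
    simp only [hφ]
    fun_prop (disch := assumption)
  have hFφ : DifferentiableOn ℂ (fun ζ => F (φ ζ)) (Metric.ball 0 1) :=
    hF.comp hφd (fun ζ h => hφim ζ (by simpa using h))
  have hGd : DifferentiableOn ℂ G (Metric.ball 0 1) := by
    apply DifferentiableOn.div
    · exact hFφ.sub_const _
    · exact hFφ.sub_const _
    · intro ζ h
      exact hne _ _ (hpos _ (hφim ζ (by simpa using h))) (hpos w hw)
  have hGm : MapsTo G (Metric.ball 0 1) (Metric.ball 0 1) := by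
    intro ζ h
    have := hlt _ _ (hpos _ (hφim ζ (by simpa using h))) (hpos w hw)
    rw [mem_ball_zero_iff]
    exact this
  have hG0 : G 0 = 0 := by simp [hG, hφ]
  set ζ₀ := (z - w) / (z - starRingEnd ℂ w) with hζ
  have hζ1 : ‖ζ₀‖ < 1 := hlt z w hz hw
  have hφζ : φ ζ₀ = z := by
    have a := hne z w hz hw
    have b := h1 _ hζ1
    simp only [hφ]
    rw [div_eq_iff b]
    simp only [hζ]
    field_simp
    ring
  have hS : ‖G ζ₀‖ ≤ ‖ζ₀‖ := Complex.norm_le_norm_of_mapsTo_ball hGd (hGm.mono_right Metric.ball_subset_closedBall) hG0 hζ1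
  simp only [hG, hφζ] at hS
  rw [hζ, norm_div, norm_div, div_le_div_iff₀ (norm_pos_iff.2 (hne _ _ (hpos z hz) (hpos w hw))) (norm_pos_iff.2 (hne _ _ hz hw))] at hS
  have hS2 := pow_le_pow_left₀ (by positivity) hS 2
  rw [mul_pow, mul_pow] at hS2
  simp only [← normSq_eq_norm_sq] at hS2
  rw [key, key] at hS2
  nlinarith

lemma schwarz_pick_weak (F : ℂ → ℂ) (hF : DifferentiableOn ℂ F {z | 0 < z.im})
    (hpos : ∀ z : ℂ, 0 < z.im → 0 ≤ (F z).im) (z w : ℂ) (hz : 0 < z.im) (hw : 0 < w.im) :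
    normSq (F z - F w) * (z.im * w.im) ≤ normSq (z - w) * ((F z).im * (F w).im) := by
  have h : ∀ δ : ℝ, 0 < δ → normSq (F z - F w) * (z.im * w.im) ≤
      normSq (z - w) * (((F z).im + δ) * ((F w).im + δ)) := by
    intro δ hδ
    have := schwarz_pick_strict (fun z => F z + δ * I) (hF.add_const _)
      (fun z hz => by have := hpos z hz; simp; linarith) z w hz hw
    simpa using this
  have ht : Filter.Tendsto (fun δ : ℝ => normSq (z - w) * (((F z).im + δ) * ((F w).im + δ)))
      (nhdsWithin 0 (Ioi 0)) (nhds (normSq (z - w) * (((F z).im + 0) * ((F w).im + 0)))) := by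
    apply Filter.Tendsto.mono_left _ nhdsWithin_le_nhds
    apply Continuous.tendsto (by fun_prop)
  simp only [add_zero] at ht
  apply ge_of_tendsto ht
  filter_upwards [self_mem_nhdsWithin] with δ hδ using h δ hδ

lemma im_slope (f : ℂ → ℂ) (x : ℝ) (d : ℂ) (hd : HasDerivAt f d x) (h0 : (f x).im = 0) :
    Filter.Tendsto (fun ε : ℝ => (f (x + ε * I)).im / ε) (nhdsWithin 0 (Ioi 0)) (nhds d.re) := by
  have h1 : HasDerivAt (fun ε : ℝ => (x : ℂ) + ε * I) I 0 := by
    have := ((Complex.ofRealCLM.hasDerivAt (x := (0:ℝ))).mul_const I).const_add (x : ℂ)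
    simpa using this
  have h2 : HasDerivAt (fun ε : ℝ => f ((x : ℂ) + ε * I)) (d * I) 0 := by
    have hd' : HasDerivAt f d ((x : ℂ) + (0 : ℝ) * I) := by simpa using hd
    exact hd'.comp (0:ℝ) h1
  have h3 : HasDerivAt (fun ε : ℝ => (f ((x : ℂ) + ε * I)).im) d.re 0 := by
    have := (Complex.imCLM.hasFDerivAt (x := f ((x : ℂ) + (0 : ℝ) * I))).comp_hasDerivAt (0:ℝ) h2
    simpa [Function.comp_def] using this
  have h4 := h3.tendsto_slope_zero_right
  simp only [zero_add, ofReal_zero, zero_mul, add_zero, h0, sub_zero, smul_eq_mul] at h4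
  refine h4.congr fun ε => ?_
  rw [div_eq_inv_mul]

lemma loewner (f : ℂ → ℂ) (hf : DifferentiableOn ℂ f {z | 0 < z.im})
    (hpos : ∀ z : ℂ, 0 < z.im → 0 ≤ (f z).im) (x c : ℝ) (d e : ℂ)
    (hx : HasDerivAt f d x) (hc : HasDerivAt f e c) (hx0 : (f x).im = 0) (hc0 : (f c).im = 0) :
    0 ≤ d.re ∧ 0 ≤ e.re ∧ ((f x).re - (f c).re) ^ 2 ≤ (x - c) ^ 2 * (d.re * e.re) := by
  have tx := im_slope f x d hx hx0
  have tc := im_slope f c e hc hc0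
  have nn : ∀ y : ℝ, ∀ᶠ ε : ℝ in nhdsWithin 0 (Ioi 0), 0 ≤ (f (y + ε * I)).im / ε := by
    intro y
    filter_upwards [self_mem_nhdsWithin] with ε hε
    have hε : 0 < ε := hε
    exact div_nonneg (hpos _ (by simpa using hε)) hε.le
  refine ⟨ge_of_tendsto tx (nn x), ge_of_tendsto tc (nn c), ?_⟩
  have cont : ∀ y : ℝ, ∀ d : ℂ, HasDerivAt f d y →
      Filter.Tendsto (fun ε : ℝ => f (y + ε * I)) (nhdsWithin 0 (Ioi 0)) (nhds (f y)) := by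
    intro y d hy
    have h1 : Filter.Tendsto (fun ε : ℝ => (y : ℂ) + ε * I) (nhdsWithin 0 (Ioi 0)) (nhds y) := by
      apply Filter.Tendsto.mono_left _ nhdsWithin_le_nhds
      have : Continuous (fun ε : ℝ => (y : ℂ) + ε * I) := by fun_prop
      simpa using this.tendsto 0
    exact hy.continuousAt.tendsto.comp h1
  have tl := (continuous_normSq.tendsto _).comp ((cont x d hx).sub (cont c e hc))
  have tr := (tx.mul tc).const_mul ((x - c) ^ 2)
  have hN : normSq (f x - f c) = ((f x).re - (f c).re) ^ 2 := by
    simp [normSq_apply, hx0, hc0]; ring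
  rw [← hN]
  refine le_of_tendsto_of_tendsto tl tr ?_
  filter_upwards [self_mem_nhdsWithin] with ε hε
  have hε : 0 < ε := hε
  have := schwarz_pick_weak f hf hpos (x + ε * I) (c + ε * I) (by simpa using hε) (by simpa using hε)
  have e1 : normSq ((x + ε * I : ℂ) - (c + ε * I)) = (x - c) ^ 2 := by
    simp [normSq_apply]; ring
  have e2 : (x + ε * I : ℂ).im = ε := by simp
  have e3 : (c + ε * I : ℂ).im = ε := by simp
  rw [e1, e2, e3] at this
  simp only [Function.comp_apply]
  rw [div_mul_div_comm, ← mul_div_assoc, le_div_iff₀ (by positivity)]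
  exact this

theorem stmt14 (c₁ c₂ c₃ c₄ : ℝ)
    (h1 : -1 < c₁) (h12 : c₁ < c₂) (h2 : c₂ < 1)
    (h3 : -1 < c₃) (h34 : c₃ < c₄) (h4 : c₄ < 1)
    (f : ℂ → ℂ) (hf : MemA1 c₁ c₂ c₃ c₄ f)
    (s M : ℝ)
    (hs : s = deriv (fun y : ℝ => (f y).re) c₂)
    (hM : ∀ x ∈ Set.Ioo (-1 : ℝ) 1, (f x).re ≤ M) :
    ∀ x ∈ Set.Ioo c₂ (1 : ℝ),
      (f x).re ≤ c₄ + s * (x - c₂) +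
        (M - c₄ - s * (1 - c₂)) * (x - c₂) ^ 2 / (1 - c₂) ^ 2 := by
  have hmem : ∀ x ∈ Ioo (-1 : ℝ) 1, (x : ℂ) ∈ C1 := fun x hx => Or.inr (by simpa using hx)
  have hder : ∀ x ∈ Ioo (-1 : ℝ) 1, HasDerivAt f (deriv f x) x := fun x hx =>
    (hf.holo.differentiableAt (isOpen_C1.mem_nhds (hmem x hx))).hasDerivAt
  have hre : ∀ x ∈ Ioo (-1 : ℝ) 1,
      HasDerivAt (fun y : ℝ => (f y).re) (deriv f x).re x := fun x hx =>
    (hder x hx).real_of_complex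
  have him : ∀ x ∈ Ioo (-1 : ℝ) 1, (f x).im = 0 := by
    intro x hx
    have := hf.symm x (hmem x hx)
    rw [conj_ofReal] at this
    exact conj_eq_iff_im.1 this.symm
  have hc2 : c₂ ∈ Ioo (-1 : ℝ) 1 := ⟨by linarith, h2⟩
  have hs' : s = (deriv f c₂).re := by rw [hs, (hre c₂ hc2).deriv]
  have hsub : {z : ℂ | 0 < z.im} ⊆ C1 := fun z hz => Or.inl (ne_of_gt hz)
  have hval : (f c₂).re = c₄ := by rw [hf.val2]; simp
  set g : ℝ → ℝ := fun x => ((f x).re - c₄ - s * (x - c₂)) / (x - c₂) ^ 2 with hg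
  have hgd : ∀ x ∈ Ioo c₂ 1, HasDerivAt g
      ((((deriv f x).re - s * 1) * (x - c₂) ^ 2 - ((f x).re - c₄ - s * (x - c₂)) *
        (2 * (x - c₂))) / ((x - c₂) ^ 2) ^ 2) x := by
    intro x hx
    have hx' : x ∈ Ioo (-1 : ℝ) 1 := ⟨by linarith [hx.1], hx.2⟩
    have hne : (x - c₂) ^ 2 ≠ 0 := pow_ne_zero _ (by linarith [hx.1])
    have a : HasDerivAt (fun x : ℝ => x - c₂) 1 x := (hasDerivAt_id x).sub_const c₂
    have b : HasDerivAt (fun x : ℝ => (x - c₂) ^ 2) (2 * (x - c₂)) x := by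
      have := a.fun_pow 2
      simpa using this
    exact (((hre x hx').sub_const c₄).sub (a.const_mul s)).div b hne
  have hmono : MonotoneOn g (Ioo c₂ 1) := by
    apply monotoneOn_of_deriv_nonneg (convex_Ioo _ _)
    · exact fun x hx => (hgd x hx).continuousAt.continuousWithinAt
    · rw [interior_Ioo]
      exact fun x hx => (hgd x hx).differentiableAt.differentiableWithinAt
    · rw [interior_Ioo]
      intro x hx
      have hx' : x ∈ Ioo (-1 : ℝ) 1 := ⟨by linarith [hx.1], hx.2⟩
      rw [(hgd x hx).deriv]
      apply div_nonneg _ (by positivity)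
      obtain ⟨p1, p2, p3⟩ := loewner f (hf.holo.mono hsub) (fun z hz => hf.upper z (hsub hz) hz)
        x c₂ _ _ (hder x hx') (hder c₂ hc2) (him x hx') (him c₂ hc2)
      rw [← hs'] at p2 p3
      rw [hval] at p3
      have hpos : 0 < x - c₂ := by linarith [hx.1]
      have q : 2 * ((f x).re - c₄) ≤ (x - c₂) * ((deriv f x).re + s) := by
        apply le_of_sq_le_sq _ (by positivity)
        nlinarith [mul_nonneg (sq_nonneg (x - c₂)) (sq_nonneg ((deriv f x).re - s))]
      have : ((deriv f x).re - s * 1) * (x - c₂) ^ 2 - ((f x).re - c₄ - s * (x - c₂)) *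
        (2 * (x - c₂)) = (x - c₂) * ((x - c₂) * ((deriv f x).re + s) - 2 * ((f x).re - c₄)) := by
        ring
      rw [this]
      exact mul_nonneg hpos.le (by linarith)
  intro x hx
  have hlim : g x ≤ (M - c₄ - s * (1 - c₂)) / (1 - c₂) ^ 2 := by
    have ht : Filter.Tendsto (fun y : ℝ => (M - c₄ - s * (y - c₂)) / (y - c₂) ^ 2)
        (nhdsWithin 1 (Iio 1)) (nhds ((M - c₄ - s * (1 - c₂)) / (1 - c₂) ^ 2)) := by
      apply Filter.Tendsto.mono_left _ nhdsWithin_le_nhds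
      have hne : (1 - c₂) ^ 2 ≠ 0 := pow_ne_zero _ (by linarith)
      have : ContinuousAt (fun y : ℝ => (M - c₄ - s * (y - c₂)) / (y - c₂) ^ 2) 1 := by
        fun_prop (disch := exact hne)
      exact this
    apply ge_of_tendsto ht
    filter_upwards [Ioo_mem_nhdsLT hx.2] with y hy
    have hy' : y ∈ Ioo c₂ 1 := ⟨hx.1.trans hy.1, hy.2⟩
    refine (hmono hx hy' hy.1.le).trans ?_
    have := hM y ⟨by linarith [hy'.1], hy.2⟩
    simp only [hg]
    gcongr
  have hpos : 0 < (x - c₂) ^ 2 := pow_pos (by linarith [hx.1]) 2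
  simp only [hg] at hlim
  rw [div_le_iff₀ hpos] at hlim
  rw [mul_div_right_comm]
  linarith
end
end
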